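/- (Theorem 13) Let 0 < θ₀ < 1, 0 < θ ≤ 1, 0 < q₀, r₀, r ≤ ∞, a, a₀, b₀ ∈ SV, and ‖s^{-1/r₀} b₀(s)/a₀(s)‖_{r₀,(1,∞)} < ∞; if θ = 1 assume additionally ‖s^{-1/r} a(s)‖_{r,(0,1)} < ∞. Put c₀(t) = a₀(t) ‖s^{-1/r₀} b₀(s)/a₀(s)‖_{r₀,(t,∞)} and ρ(t) = t^{1-θ₀} c₀(t). Then (Ā^𝓛_{θ₀,r₀,b₀,q₀,a₀}, A₁)_{θ,r;a} ≅ Ā_{η,r;a^#}, where η = (1-θ)θ₀ + θ and a^#(t) = c₀(t)^{1-θ} a(ρ(t)). -/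

import Mathlib

open MeasureTheory Set ENNReal Filter

noncomputable section

/-- The `L_q` quasi-norm (with respect to Lebesgue measure) of an `ℝ≥0∞`-valued
function over a set of reals; for `q = ∞` it is the essential supremum. -/
def LqNorm (q : ℝ≥0∞) (s : Set ℝ) (g : ℝ → ℝ≥0∞) : ℝ≥0∞ :=
  if q = ∞ then essSup g (volume.restrict s)
  else (∫⁻ t in s, g t ^ q.toReal) ^ q⁻¹.toReal

/-- The weight `s ↦ s ^ (-1/r) * b s`, as an `ℝ≥0∞`-valued function
(`1/∞ = 0` by convention). -/
def svWgt (r : ℝ≥0∞) (b : ℝ → ℝ) : ℝ → ℝ≥0∞ :=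
  fun s => ENNReal.ofReal (s ^ (-(r⁻¹.toReal)) * b s)

/-- `f` and `g` are equivalent on `s`: each is bounded by a constant multiple
of the other there. -/
def EquivOn (s : Set ℝ) (f g : ℝ → ℝ) : Prop :=
  ∃ C : ℝ, 0 < C ∧ ∀ t ∈ s, C⁻¹ * g t ≤ f t ∧ f t ≤ C * g t

/-- A positive measurable function `b` on `(0,∞)` is slowly varying if for every
`ε > 0`, `t ^ ε * b t` is equivalent to a non-decreasing function and
`t ^ (-ε) * b t` is equivalent to a non-increasing function. -/
def SlowlyVarying (b : ℝ → ℝ) : Prop :=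
  AEMeasurable b (volume.restrict (Ioi 0)) ∧ (∀ t ∈ Ioi (0:ℝ), 0 < b t) ∧
    ∀ ε : ℝ, 0 < ε →
      (∃ g : ℝ → ℝ, MonotoneOn g (Ioi 0) ∧ EquivOn (Ioi 0) (fun t => t ^ ε * b t) g) ∧
      (∃ g : ℝ → ℝ, AntitoneOn g (Ioi 0) ∧ EquivOn (Ioi 0) (fun t => t ^ (-ε) * b t) g)

/-- A quasi-Banach space continuously embedded into the ambient (Hausdorff) space `E`,
recorded via its extended-real-valued quasi-norm; the space itself is the set of
vectors of finite quasi-norm. -/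
structure QuasiBanach (E : Type*) [AddCommGroup E] [Module ℝ E] where
  N : E → ℝ≥0∞
  zero : N 0 = 0
  definite : ∀ x, N x = 0 → x = 0
  smul : ∀ (c : ℝ) (x : E), N (c • x) = ENNReal.ofReal |c| * N x
  quasi : ∃ C : ℝ≥0∞, 1 ≤ C ∧ C ≠ ∞ ∧ ∀ x y, N (x + y) ≤ C * (N x + N y)
  complete : ∀ f : ℕ → E,
    (∀ ε : ℝ≥0∞, 0 < ε → ∃ M : ℕ, ∀ m ≥ M, ∀ n ≥ M, N (f m - f n) < ε) →
    (∀ n, N (f n) ≠ ∞) →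
    ∃ g : E, N g ≠ ∞ ∧ Tendsto (fun n => N (f n - g)) atTop (nhds 0)

variable {E : Type*} [AddCommGroup E] [Module ℝ E]

/-- The Peetre K-functional of the couple whose quasi-norms are `N₀`, `N₁`. -/
def Kf (N₀ N₁ : E → ℝ≥0∞) (t : ℝ) (f : E) : ℝ≥0∞ :=
  ⨅ g : E, N₀ g + ENNReal.ofReal t * N₁ (f - g)

/-- The quasi-norm of the real interpolation space `Ā_{θ,q;b}`. -/
def normK (N₀ N₁ : E → ℝ≥0∞) (θ : ℝ) (q : ℝ≥0∞) (b : ℝ → ℝ) (f : E) : ℝ≥0∞ :=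
  LqNorm q (Ioi 0) fun u =>
    ENNReal.ofReal (u ^ (-θ - q⁻¹.toReal) * b u) * Kf N₀ N₁ u f

/-- The quasi-norm of the limiting interpolation space `Ā^𝓛_{σ,r,b,q,a}`. -/
def normL (N₀ N₁ : E → ℝ≥0∞) (σ : ℝ) (r q : ℝ≥0∞) (b a : ℝ → ℝ) (f : E) : ℝ≥0∞ :=
  LqNorm r (Ioi 0) fun t =>
    ENNReal.ofReal (t ^ (-(r⁻¹.toReal)) * (b t / a t)) *
      LqNorm q (Ioo 0 t) fun u =>
        ENNReal.ofReal (u ^ (-σ - q⁻¹.toReal) * a u) * Kf N₀ N₁ u f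

/-- The quasi-norm of the limiting interpolation space `Ā^𝓡_{σ,r,b,q,a}`. -/
def normR (N₀ N₁ : E → ℝ≥0∞) (σ : ℝ) (r q : ℝ≥0∞) (b a : ℝ → ℝ) (f : E) : ℝ≥0∞ :=
  LqNorm r (Ioi 0) fun t =>
    ENNReal.ofReal (t ^ (-(r⁻¹.toReal)) * (b t / a t)) *
      LqNorm q (Ioi t) fun u =>
        ENNReal.ofReal (u ^ (-σ - q⁻¹.toReal) * a u) * Kf N₀ N₁ u f

/-- Two (extended-real-valued) quasi-norms define the same space with
equivalent quasi-norms. -/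
def EquivNorms (nX nY : E → ℝ≥0∞) : Prop :=
  ∃ C : ℝ≥0∞, 0 < C ∧ C ≠ ∞ ∧ ∀ f : E, C⁻¹ * nY f ≤ nX f ∧ nX f ≤ C * nY f

/-! In the variable `x = log t`, weights `t ^ α * b t` with `b` slowly varying are exponentials of
functions that are linear up to an arbitrarily small slope, and dilations become translations. Such
a function varies boundedly on unit intervals, and so does `x ↦ log K(exp x, f)`; hence `L_q`
quasi-norms may be discretized, for every `q`, and a change of variables along an almost linear
function of positive slope costs only a constant.

The substance is a Holmstedt type estimate for the couple (`𝓛`-space, `A₁`): up to constants,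
`K(ρ(t), f)` lies between `F(t) = t ^ (-θ₀) * c₀ t * K(t, f; A₀, A₁)` and
`sup {(t / u) ^ ε * F(u) : u ≤ t}`. The upper bound comes from evaluating the `𝓛`-quasi-norm on an
arbitrary `g`, passing from `g` to `f` below `t` and using `K(u, g) ≤ ‖g‖_{A₀}` above it. The weight
of negative exponent `-θ` in `ρ(t)` then allows a Hardy inequality to remove the supremum. -/

open scoped NNReal

/-- The exponential with values in `ℝ≥0∞`. After the substitution `t = exp x`, every power weight
and every slowly varying weight is of the form `eexp ∘ φ`. -/
def eexp (x : ℝ) : ℝ≥0∞ := ENNReal.ofReal (Real.exp x)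

lemma eexp_add (x y : ℝ) : eexp (x + y) = eexp x * eexp y := by
  rw [eexp, Real.exp_add, ENNReal.ofReal_mul (Real.exp_nonneg x), eexp, eexp]

lemma eexp_zero : eexp 0 = 1 := by simp [eexp]

lemma eexp_ne_top (x : ℝ) : eexp x ≠ ∞ := ENNReal.ofReal_ne_top

lemma eexp_ne_zero (x : ℝ) : eexp x ≠ 0 := (ENNReal.ofReal_pos.2 x.exp_pos).ne'

lemma eexp_le_eexp_iff {x y : ℝ} : eexp x ≤ eexp y ↔ x ≤ y := by
  rw [eexp, eexp, ENNReal.ofReal_le_ofReal_iff (Real.exp_nonneg y), Real.exp_le_exp]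

lemma eexp_mono {x y : ℝ} (h : x ≤ y) : eexp x ≤ eexp y := eexp_le_eexp_iff.2 h

lemma eexp_rpow (x p : ℝ) : eexp x ^ p = eexp (x * p) := by
  rw [eexp, ENNReal.ofReal_rpow_of_pos x.exp_pos, ← Real.exp_mul, eexp]

lemma eexp_mul_eexp_neg (x : ℝ) : eexp x * eexp (-x) = 1 := by
  rw [← eexp_add, add_neg_cancel, eexp_zero]

lemma eexp_neg_mul_eexp (x : ℝ) : eexp (-x) * eexp x = 1 := by
  rw [mul_comm, eexp_mul_eexp_neg]

lemma eexp_mul_le_iff {x : ℝ} {a b : ℝ≥0∞} : eexp x * a ≤ b ↔ a ≤ eexp (-x) * b := by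
  rw [← ENNReal.mul_le_mul_iff_right (eexp_ne_zero (-x)) (eexp_ne_top (-x)), ← mul_assoc,
    eexp_neg_mul_eexp, one_mul]

lemma eexp_log {x : ℝ} (hx : 0 < x) : eexp (Real.log x) = ENNReal.ofReal x := by
  rw [eexp, Real.exp_log hx]

/-- `F i` is at most a constant multiple of `G i`, uniformly in `i`. For (quasi-)norms `F` and `G`
on the same space this is the boundedness of an embedding. -/
def Dominated {ι : Type*} (F G : ι → ℝ≥0∞) : Prop := ∃ C : ℝ≥0, ∀ i, F i ≤ C * G i

infix:50 " ≲ " => Dominated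

lemma Dominated.trans {ι : Type*} {F G H : ι → ℝ≥0∞} : F ≲ G → G ≲ H → F ≲ H := by
  rintro ⟨C, hC⟩ ⟨D, hD⟩
  refine ⟨C * D, fun i => (hC i).trans ?_⟩
  rw [ENNReal.coe_mul, mul_assoc]
  gcongr
  exact hD i

instance {ι : Type*} : Trans (Dominated (ι := ι)) Dominated Dominated := ⟨Dominated.trans⟩

section LpEstimates

variable {α β ι : Type*} [MeasurableSpace α] [MeasurableSpace β] {μ : Measure α} {p : ℝ≥0∞}

lemma eLpNorm_le_mul_eLpNorm {f g : α → ℝ≥0∞} {C : ℝ≥0} (h : ∀ᵐ x ∂μ, f x ≤ C * g x) :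
    eLpNorm f p μ ≤ C * eLpNorm g p μ :=
  eLpNorm_le_mul_eLpNorm_of_ae_le_mul' (by simpa only [enorm_eq_self] using h) p

lemma Dominated.eLpNorm {F G : ι → α → ℝ≥0∞}
    (h : Function.uncurry F ≲ Function.uncurry G) :
    (fun i => eLpNorm (F i) p μ) ≲ fun i => eLpNorm (G i) p μ := by
  obtain ⟨C, hC⟩ := h
  exact ⟨C, fun i => eLpNorm_le_mul_eLpNorm (ae_of_all _ fun x => hC (i, x))⟩

lemma mul_eLpNorm_le_eLpNorm_mul (c : ℝ≥0∞) (f : α → ℝ≥0∞) :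
    c * eLpNorm f p μ ≤ eLpNorm (fun x => c * f x) p μ := by
  rcases eq_or_ne p 0 with rfl | hp
  · simp
  rcases eq_or_ne p ∞ with rfl | hp'
  · simp only [eLpNorm_exponent_top, eLpNormEssSup, enorm_eq_self, ENNReal.essSup_const_mul, le_rfl]
  have hp₀ := ENNReal.toReal_pos hp hp'
  simp only [eLpNorm_eq_lintegral_rpow_enorm_toReal hp hp', enorm_eq_self]
  calc c * (∫⁻ x, f x ^ p.toReal ∂μ) ^ (1 / p.toReal)
      = (c ^ p.toReal * ∫⁻ x, f x ^ p.toReal ∂μ) ^ (1 / p.toReal) := by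
        rw [ENNReal.mul_rpow_of_nonneg _ _ (by positivity), one_div,
          ENNReal.rpow_rpow_inv hp₀.ne']
    _ ≤ (∫⁻ x, (c * f x) ^ p.toReal ∂μ) ^ (1 / p.toReal) := by
        simp only [ENNReal.mul_rpow_of_nonneg _ _ hp₀.le]
        gcongr
        exact lintegral_const_mul_le _ _

lemma eLpNorm_add_measure_le (p : ℝ≥0∞) :
    ∃ C : ℝ≥0, ∀ (μ ν : Measure α) (f : α → ℝ≥0∞),
      eLpNorm f p (μ + ν) ≤ C * (eLpNorm f p μ + eLpNorm f p ν) := by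
  rcases eq_or_ne p 0 with rfl | hp
  · exact ⟨0, by simp⟩
  rcases eq_or_ne p ∞ with rfl | hp'
  · refine ⟨1, fun μ ν f => ?_⟩
    simp only [eLpNorm_exponent_top, eLpNormEssSup, enorm_eq_self, ENNReal.coe_one, one_mul]
    exact essSup_le_of_ae_le _ (ae_add_measure_iff.2
      ⟨(ENNReal.ae_le_essSup f).mono fun x hx => hx.trans le_self_add,
        (ENNReal.ae_le_essSup f).mono fun x hx => hx.trans le_add_self⟩)
  obtain ⟨C, hC⟩ : ∃ C : ℝ≥0, ∀ x y : ℝ≥0∞,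
      (x + y) ^ (1 / p.toReal) ≤ C * (x ^ (1 / p.toReal) + y ^ (1 / p.toReal)) := by
    rcases le_total 1 (1 / p.toReal) with h | h
    · refine ⟨2 ^ (1 / p.toReal - 1), fun x y => ?_⟩
      rw [ENNReal.coe_rpow_of_ne_zero two_ne_zero]
      exact ENNReal.rpow_add_le_mul_rpow_add_rpow x y h
    · refine ⟨1, fun x y => ?_⟩
      rw [ENNReal.coe_one, one_mul]
      exact ENNReal.rpow_add_le_add_rpow x y (by positivity) h
  refine ⟨C, fun μ ν f => ?_⟩
  simp only [eLpNorm_eq_lintegral_rpow_enorm_toReal hp hp', lintegral_add_measure]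
  exact hC _ _

lemma map_count_le [Countable β] {κ : α → β} (hκ : Measurable κ) {N : ℝ≥0}
    (hN : ∀ b, Measure.count (κ ⁻¹' {b}) ≤ N) :
    Measure.count.map κ ≤ N • Measure.count := by
  refine Measure.le_iff.2 fun s hs => ?_
  rw [Measure.map_apply hκ hs, Measure.smul_apply, Measure.count_apply hs,
    ← biUnion_preimage_singleton]
  calc Measure.count (⋃ b ∈ s, κ ⁻¹' {b})
      ≤ ∑' b : s, Measure.count (κ ⁻¹' {b.1}) := measure_biUnion_le _ s.to_countable _
    _ ≤ ∑' _ : s, (N : ℝ≥0∞) := ENNReal.tsum_le_tsum fun b => hN b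
    _ = N • (s.encard : ℝ≥0∞) := by
      rw [ENNReal.tsum_const, mul_comm, ENat.card_coe_set_eq, ENNReal.smul_def, smul_eq_mul]

lemma count_preimage_singleton_le {κ : ℤ → ℤ} {N : ℕ}
    (hN : ∀ m n, κ m = κ n → |m - n| ≤ N) (k : ℤ) :
    Measure.count (κ ⁻¹' {k}) ≤ ((2 * N + 1 : ℕ) : ℝ≥0) := by
  rcases (κ ⁻¹' {k}).eq_empty_or_nonempty with h | ⟨m, hm⟩
  · simp [h]
  have hsub : κ ⁻¹' {k} ⊆ Finset.Icc (m - N) (m + N) := fun n hn => by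
    have := abs_le.1 (hN m n (hm.trans hn.symm))
    simp only [Finset.coe_Icc, mem_Icc]
    lia
  calc Measure.count (κ ⁻¹' {k}) ≤ Measure.count (Finset.Icc (m - N) (m + N) : Set ℤ) :=
        measure_mono hsub
    _ = ((2 * N + 1 : ℕ) : ℝ≥0) := by
      rw [Measure.count_apply_finset, Int.card_Icc]
      norm_cast
      lia

lemma eLpNorm_comp_le_of_fibers (p : ℝ≥0∞) {κ : ℤ → ℤ} {N : ℕ}
    (hN : ∀ m n, κ m = κ n → |m - n| ≤ N) (f : ℤ → ℝ≥0∞) :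
    eLpNorm (f ∘ κ) p Measure.count ≤
      (((2 * N + 1 : ℕ) : ℝ≥0) ^ p.toReal⁻¹ : ℝ≥0) * eLpNorm f p Measure.count := by
  have hκ : Measurable κ := measurable_from_top
  have hN₀ : ((2 * N + 1 : ℕ) : ℝ≥0) ≠ 0 := by positivity
  rw [← eLpNorm_map_measure (Measurable.of_discrete.aestronglyMeasurable) hκ.aemeasurable]
  calc eLpNorm f p (Measure.count.map κ)
      ≤ eLpNorm f p (((2 * N + 1 : ℕ) : ℝ≥0) • Measure.count) :=
        eLpNorm_mono_measure f (map_count_le hκ (count_preimage_singleton_le hN))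
    _ = _ := by rw [eLpNorm_smul_measure_of_ne_zero' hN₀, ENNReal.smul_def, smul_eq_mul]

lemma map_floor_volume : (volume : Measure ℝ).map Int.floor = Measure.count := by
  refine Measure.ext_iff_singleton.2 fun n => ?_
  rw [Measure.map_apply Int.measurable_floor (measurableSet_singleton n),
    Int.preimage_floor_singleton, Real.volume_Ico, Measure.count_singleton]
  simp

lemma eLpNorm_comp_floor (p : ℝ≥0∞) (f : ℤ → ℝ≥0∞) :
    eLpNorm (fun x : ℝ => f ⌊x⌋) p volume = eLpNorm f p Measure.count := by
  rw [← map_floor_volume, eLpNorm_map_measure Measurable.of_discrete.aestronglyMeasurable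
    Int.measurable_floor.aemeasurable]
  rfl

lemma eLpNorm_comp_of_measurePreserving {κ : Measure β} {φ : α → β} (hφ : MeasurePreserving φ μ κ)
    (hφ' : MeasurableEmbedding φ) (g : β → ℝ≥0∞) :
    eLpNorm (fun x => g (φ x)) p μ = eLpNorm g p κ := by
  rw [← hφ.map_eq, hφ'.eLpNorm_map_measure]
  rfl

end LpEstimates

section LocallyComparable

variable {ι : Type*} {F G : ι → ℝ → ℝ≥0∞} {p : ℝ≥0∞}

/-- A family of functions whose values at points of bounded distance are comparable, with
constants independent of the member of the family. -/
def LocallyComparable (F : ι → ℝ → ℝ≥0∞) : Prop :=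
  ∀ d : ℝ, ∃ C : ℝ≥0, ∀ i x y, |x - y| ≤ d → F i x ≤ C * F i y

lemma LocallyComparable.mul (hF : LocallyComparable F) (hG : LocallyComparable G) :
    LocallyComparable fun i x => F i x * G i x := by
  intro d
  obtain ⟨C, hC⟩ := hF d
  obtain ⟨D, hD⟩ := hG d
  refine ⟨C * D, fun i x y hxy => ?_⟩
  calc F i x * G i x ≤ C * F i y * (D * G i y) := mul_le_mul' (hC i x y hxy) (hD i x y hxy)
    _ = _ := by rw [ENNReal.coe_mul]; ring

lemma LocallyComparable.eLpNorm_volume_dominated (hF : LocallyComparable F) :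
    (fun i => eLpNorm (F i) p volume) ≲ fun i => eLpNorm (fun n : ℤ => F i n) p Measure.count := by
  obtain ⟨C, hC⟩ := hF 1
  refine ⟨C, fun i => ?_⟩
  beta_reduce
  rw [← eLpNorm_comp_floor p fun n : ℤ => F i n]
  refine eLpNorm_le_mul_eLpNorm (ae_of_all _ fun x => hC i x ⌊x⌋ ?_)
  exact (abs_of_nonneg (Int.fract_nonneg x)).trans_le (Int.fract_lt_one x).le

lemma LocallyComparable.eLpNorm_count_dominated (hF : LocallyComparable F) :
    (fun i => eLpNorm (fun n : ℤ => F i n) p Measure.count) ≲ fun i => eLpNorm (F i) p volume := by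
  obtain ⟨C, hC⟩ := hF 1
  refine ⟨C, fun i => ?_⟩
  beta_reduce
  rw [← eLpNorm_comp_floor p fun n : ℤ => F i n]
  refine eLpNorm_le_mul_eLpNorm (ae_of_all _ fun x => hC i ⌊x⌋ x ?_)
  rw [abs_sub_comm]
  exact (abs_of_nonneg (Int.fract_nonneg x)).trans_le (Int.fract_lt_one x).le

lemma LocallyComparable.eLpNorm_dominated_of_fibers (hF : LocallyComparable F)
    (hG : LocallyComparable G) {κ : ℤ → ℤ} {N : ℕ} (hκ : ∀ m n, κ m = κ n → |m - n| ≤ N)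
    {C : ℝ≥0} (h : ∀ i (n : ℤ), F i n ≤ C * G i (κ n)) :
    (fun i => eLpNorm (F i) p volume) ≲ fun i => eLpNorm (G i) p volume :=
  calc (fun i => eLpNorm (F i) p volume)
      ≲ fun i => eLpNorm (fun n : ℤ => F i n) p Measure.count := hF.eLpNorm_volume_dominated
    _ ≲ fun i => eLpNorm (fun n : ℤ => G i (κ n)) p Measure.count :=
      ⟨C, fun i => eLpNorm_le_mul_eLpNorm (ae_of_all _ (h i))⟩
    _ ≲ fun i => eLpNorm (fun n : ℤ => G i n) p Measure.count :=
      ⟨_, fun i => eLpNorm_comp_le_of_fibers p hκ fun n : ℤ => G i n⟩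
    _ ≲ fun i => eLpNorm (G i) p volume := hG.eLpNorm_count_dominated

end LocallyComparable

section AlmostLinear

variable {p q : ℝ} {φ ψ : ℝ → ℝ}

/-- `φ` has slope `p` up to a sublinear error. In the variable `x = log t` these are the logarithms
of the functions `t ^ p * b t` with `b` slowly varying. -/
def AlmostLinear (p : ℝ) (φ : ℝ → ℝ) : Prop :=
  ∀ ε > 0, ∃ M, ∀ x y, |φ x - φ y - p * (x - y)| ≤ ε * |x - y| + M

lemma almostLinear_mul_id (p : ℝ) : AlmostLinear p fun x => p * x := fun ε hε =>
  ⟨0, fun x y => by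
    rw [← mul_sub, sub_self, abs_zero]
    positivity⟩

lemma AlmostLinear.add (hφ : AlmostLinear p φ) (hψ : AlmostLinear q ψ) :
    AlmostLinear (p + q) fun x => φ x + ψ x := by
  intro ε hε
  obtain ⟨M, hM⟩ := hφ (ε / 2) (half_pos hε)
  obtain ⟨N, hN⟩ := hψ (ε / 2) (half_pos hε)
  refine ⟨M + N, fun x y => ?_⟩
  calc |φ x + ψ x - (φ y + ψ y) - (p + q) * (x - y)|
      = |(φ x - φ y - p * (x - y)) + (ψ x - ψ y - q * (x - y))| := by ring_nf
    _ ≤ (ε / 2 * |x - y| + M) + (ε / 2 * |x - y| + N) :=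
      (abs_add_le _ _).trans (add_le_add (hM x y) (hN x y))
    _ = ε * |x - y| + (M + N) := by ring

lemma AlmostLinear.comp (hφ : AlmostLinear p φ) (hψ : AlmostLinear q ψ) :
    AlmostLinear (p * q) fun x => φ (ψ x) := by
  intro ε hε
  obtain ⟨δ, hδ, hδ₁, hδε⟩ : ∃ δ : ℝ, 0 < δ ∧ δ ≤ 1 ∧ δ * (|p| + |q| + 1) ≤ ε :=
    ⟨min 1 (ε / (|p| + |q| + 1)), by positivity, min_le_left _ _,
      (le_div_iff₀ (by positivity)).1 (min_le_right _ _)⟩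
  obtain ⟨M, hM⟩ := hφ δ hδ
  obtain ⟨N, hN⟩ := hψ δ hδ
  refine ⟨δ * N + M + |p| * N, fun x y => ?_⟩
  have hψxy : |ψ x - ψ y| ≤ (|q| + 1) * |x - y| + N :=
    calc |ψ x - ψ y| = |(ψ x - ψ y - q * (x - y)) + q * (x - y)| := by ring_nf
      _ ≤ (δ * |x - y| + N) + |q| * |x - y| := by
        rw [← abs_mul]
        exact (abs_add_le _ _).trans (add_le_add_left (hN x y) _)
      _ ≤ (1 * |x - y| + N) + |q| * |x - y| := by gcongr
      _ = (|q| + 1) * |x - y| + N := by ring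
  calc |φ (ψ x) - φ (ψ y) - p * q * (x - y)|
      = |(φ (ψ x) - φ (ψ y) - p * (ψ x - ψ y)) + p * (ψ x - ψ y - q * (x - y))| := by ring_nf
    _ ≤ (δ * |ψ x - ψ y| + M) + |p| * (δ * |x - y| + N) := by
      refine (abs_add_le _ _).trans (add_le_add (hM _ _) ?_)
      rw [abs_mul]
      gcongr
      exact hN x y
    _ ≤ (δ * ((|q| + 1) * |x - y| + N) + M) + |p| * (δ * |x - y| + N) := by gcongr
    _ = δ * (|p| + |q| + 1) * |x - y| + (δ * N + M + |p| * N) := by ring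
    _ ≤ ε * |x - y| + (δ * N + M + |p| * N) := by gcongr

lemma AlmostLinear.neg (hφ : AlmostLinear p φ) : AlmostLinear (-p) fun x => -φ x := by
  simpa using (almostLinear_mul_id (-1)).comp hφ

lemma AlmostLinear.sub (hφ : AlmostLinear p φ) (hψ : AlmostLinear q ψ) :
    AlmostLinear (p - q) fun x => φ x - ψ x := by
  simpa only [sub_eq_add_neg] using hφ.add hψ.neg

lemma AlmostLinear.exists_sub_le (hφ : AlmostLinear p φ) (hpq : p < q) :
    ∃ M, ∀ x y, y ≤ x → φ x ≤ φ y + q * (x - y) + M := by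
  obtain ⟨M, hM⟩ := hφ (q - p) (sub_pos.2 hpq)
  refine ⟨M, fun x y hyx => ?_⟩
  have := (abs_le.1 (hM x y)).2
  rw [abs_of_nonneg (sub_nonneg.2 hyx)] at this
  linarith

lemma AlmostLinear.exists_le_sub (hφ : AlmostLinear p φ) (hqp : q < p) :
    ∃ M, ∀ x y, y ≤ x → φ y + q * (x - y) ≤ φ x + M := by
  obtain ⟨M, hM⟩ := hφ (p - q) (sub_pos.2 hqp)
  refine ⟨M, fun x y hyx => ?_⟩
  have := (abs_le.1 (hM x y)).1
  rw [abs_of_nonneg (sub_nonneg.2 hyx)] at this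
  linarith

lemma AlmostLinear.exists_abs_sub_le (hφ : AlmostLinear p φ) (d : ℝ) :
    ∃ M, ∀ x y, |x - y| ≤ d → |φ x - φ y| ≤ M := by
  obtain ⟨M, hM⟩ := hφ 1 one_pos
  refine ⟨(|p| + 1) * d + M, fun x y hxy => ?_⟩
  calc |φ x - φ y| = |(φ x - φ y - p * (x - y)) + p * (x - y)| := by ring_nf
    _ ≤ (1 * |x - y| + M) + |p| * |x - y| := by
      rw [← abs_mul]
      exact (abs_add_le _ _).trans (add_le_add_left (hM x y) _)
    _ = (|p| + 1) * |x - y| + M := by ring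
    _ ≤ (|p| + 1) * d + M := by gcongr

lemma AlmostLinear.locallyComparable {ι : Type*} (hφ : AlmostLinear p φ) :
    LocallyComparable fun (_ : ι) x => eexp (φ x) := by
  intro d
  obtain ⟨M, hM⟩ := hφ.exists_abs_sub_le d
  refine ⟨(Real.exp M).toNNReal, fun _ x y hxy => ?_⟩
  calc eexp (φ x) ≤ eexp (M + φ y) := eexp_mono (by linarith [le_of_abs_le (hM x y hxy)])
    _ = eexp M * eexp (φ y) := eexp_add _ _

lemma LocallyComparable.comp {ι : Type*} {F : ι → ℝ → ℝ≥0∞} (hF : LocallyComparable F)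
    (hφ : AlmostLinear p φ) : LocallyComparable fun i x => F i (φ x) := by
  intro d
  obtain ⟨M, hM⟩ := hφ.exists_abs_sub_le d
  obtain ⟨C, hC⟩ := hF M
  exact ⟨C, fun i x y hxy => hC i _ _ (hM x y hxy)⟩

lemma AlmostLinear.exists_mul_abs_sub_le (hφ : AlmostLinear p φ) (hp : 0 < p) :
    ∃ M, ∀ x y, p / 2 * |x - y| ≤ |φ x - φ y| + M := by
  obtain ⟨M, hM⟩ := hφ (p / 2) (half_pos hp)
  refine ⟨M, fun x y => ?_⟩
  have h : p * |x - y| ≤ |φ x - φ y| + (p / 2 * |x - y| + M) :=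
    calc p * |x - y| = |p * (x - y)| := by rw [abs_mul, abs_of_pos hp]
      _ = |(φ x - φ y) - (φ x - φ y - p * (x - y))| := by ring_nf
      _ ≤ |φ x - φ y| + (p / 2 * |x - y| + M) :=
        (abs_sub _ _).trans (add_le_add_right (hM x y) _)
  linarith

lemma AlmostLinear.exists_int_near (hφ : AlmostLinear p φ) (hp : 0 < p) :
    ∃ d, ∀ y, ∃ n : ℤ, |φ n - y| ≤ d := by
  obtain ⟨M, hM⟩ := hφ.exists_le_sub (half_lt_self hp)
  obtain ⟨d, hd⟩ := hφ.exists_abs_sub_le 1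
  refine ⟨d, fun y => ?_⟩
  obtain ⟨b, hb⟩ := exists_int_gt ((y + M - φ 0) / (p / 2))
  obtain ⟨a, ha⟩ := exists_int_lt (-|(φ 0 + M - y) / (p / 2)|)
  have hbdd : ∀ n : ℤ, φ n ≤ y → n ≤ max b 0 := fun n hn => by
    by_contra! h
    have hbn : (b : ℝ) < n := by exact_mod_cast (le_max_left b 0).trans_lt h
    have h0n : (0 : ℝ) ≤ n := by exact_mod_cast (le_max_right b 0).trans h.le
    rw [div_lt_iff₀ (half_pos hp)] at hb
    nlinarith [hM n 0 h0n]
  have hne : ∃ n : ℤ, φ n ≤ y := by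
    have ha₀ : (a : ℝ) ≤ 0 := (ha.le.trans (neg_nonpos.2 (abs_nonneg _)))
    have ha' : (φ 0 + M - y) / (p / 2) ≤ -a := by
      linarith [le_abs_self ((φ 0 + M - y) / (p / 2))]
    rw [div_le_iff₀ (half_pos hp)] at ha'
    exact ⟨a, by nlinarith [hM 0 a ha₀]⟩
  obtain ⟨n, hn, hmax⟩ := Int.exists_greatest_of_bdd ⟨max b 0, hbdd⟩ hne
  have hn₁ : y < φ (n + 1 : ℤ) := by
    by_contra! h
    exact absurd (hmax _ h) (by lia)
  refine ⟨n, ?_⟩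
  rw [abs_sub_comm, abs_of_nonneg (sub_nonneg.2 hn)]
  calc y - φ n ≤ φ (n + 1 : ℤ) - φ n := by gcongr
    _ ≤ d := le_of_abs_le (hd _ _ (by simp))

lemma AlmostLinear.eLpNorm_comp_dominated {ι : Type*} {F : ι → ℝ → ℝ≥0∞} {r : ℝ≥0∞}
    (hφ : AlmostLinear p φ) (hp : 0 < p) (hF : LocallyComparable F) :
    (fun i => eLpNorm (fun x => F i (φ x)) r volume) ≲ fun i => eLpNorm (F i) r volume := by
  obtain ⟨M, hM⟩ := hφ.exists_mul_abs_sub_le hp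
  obtain ⟨N, hN⟩ := exists_nat_ge ((1 + M) / (p / 2))
  obtain ⟨C, hC⟩ := hF 1
  refine (hF.comp hφ).eLpNorm_dominated_of_fibers hF (κ := fun n => ⌊φ n⌋) (N := N)
    (fun m n hmn => ?_) (C := C) fun i n => hC i _ _ ?_
  · have hφmn : |φ m - φ n| < 1 := Int.abs_sub_lt_one_of_floor_eq_floor hmn
    rw [div_le_iff₀ (half_pos hp)] at hN
    have : |(m : ℝ) - n| ≤ N := by
      refine le_of_mul_le_mul_right ?_ (half_pos hp)
      linarith [hM m n]
    exact_mod_cast this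
  · exact (abs_of_nonneg (Int.fract_nonneg _)).trans_le (Int.fract_lt_one _).le

lemma AlmostLinear.eLpNorm_dominated_comp {ι : Type*} {F : ι → ℝ → ℝ≥0∞} {r : ℝ≥0∞}
    (hφ : AlmostLinear p φ) (hp : 0 < p) (hF : LocallyComparable F) :
    (fun i => eLpNorm (F i) r volume) ≲ fun i => eLpNorm (fun x => F i (φ x)) r volume := by
  obtain ⟨d, hd⟩ := hφ.exists_int_near hp
  choose κ hκ using fun n : ℤ => hd n
  obtain ⟨N, hN⟩ := exists_nat_ge (2 * d)
  obtain ⟨C, hC⟩ := hF d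
  refine hF.eLpNorm_dominated_of_fibers (hF.comp hφ) (κ := κ) (N := N)
    (fun m n hmn => ?_) (C := C) fun i n => hC i _ _ ?_
  · have : |(m : ℝ) - n| ≤ N :=
      calc |(m : ℝ) - n| ≤ |(m : ℝ) - φ (κ m)| + |φ (κ m) - n| := abs_sub_le _ _ _
        _ ≤ d + d := by
          rw [abs_sub_comm (m : ℝ)]
          exact add_le_add (hκ m) (hmn ▸ hκ n)
        _ ≤ N := by linarith
    exact_mod_cast this
  · rw [abs_sub_comm]
    exact hκ n

end AlmostLinear

section ExpDecay

variable {δ : ℝ}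

lemma integrable_exp_neg_mul_abs (hδ : 0 < δ) :
    Integrable fun x : ℝ => Real.exp (-δ * |x|) := by
  rw [← integrableOn_univ, ← Iic_union_Ioi (a := (0 : ℝ)), integrableOn_union]
  constructor
  · refine (integrableOn_exp_mul_Iic hδ 0).congr_fun (fun x hx => ?_) measurableSet_Iic
    simp [abs_of_nonpos (mem_Iic.1 hx)]
  · refine (exp_neg_integrableOn_Ioi 0 hδ).congr_fun (fun x hx => ?_) measurableSet_Ioi
    simp [abs_of_pos (mem_Ioi.1 hx)]

lemma eLpNorm_eexp_neg_mul_abs_ne_top (hδ : 0 < δ) (p : ℝ≥0∞) :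
    eLpNorm (fun x : ℝ => eexp (-δ * |x|)) p volume ≠ ∞ := by
  rcases eq_or_ne p 0 with rfl | hp
  · simp
  rcases eq_or_ne p ∞ with rfl | hp'
  · rw [eLpNorm_exponent_top]
    refine ne_top_of_le_ne_top one_ne_top (essSup_le_of_ae_le 1 (ae_of_all _ fun x => ?_))
    exact (eexp_mono (by nlinarith [abs_nonneg x])).trans eexp_zero.le
  have hδp : 0 < δ * p.toReal := mul_pos hδ (ENNReal.toReal_pos hp hp')
  have h := (integrable_exp_neg_mul_abs hδp).lintegral_lt_top
  rw [eLpNorm_eq_lintegral_rpow_enorm_toReal hp hp']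
  refine ENNReal.rpow_ne_top_of_nonneg (by positivity) (ne_of_eq_of_ne ?_ h.ne)
  refine lintegral_congr fun x => ?_
  rw [enorm_eq_self, eexp_rpow, eexp]
  ring_nf

lemma exists_eLpNorm_le_of_le_exp_decay (hδ : 0 < δ) (p : ℝ≥0∞) :
    ∃ C : ℝ≥0, ∀ (s : Set ℝ), MeasurableSet s → ∀ (x : ℝ) (T : ℝ≥0∞) (f : ℝ → ℝ≥0∞),
      (∀ y ∈ s, f y ≤ T * eexp (-δ * |y - x|)) → eLpNorm f p (volume.restrict s) ≤ C * T := by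
  lift eLpNorm (fun x : ℝ => eexp (-δ * |x|)) p volume to ℝ≥0
    using eLpNorm_eexp_neg_mul_abs_ne_top hδ p with I hI
  refine ⟨I + 1, fun s hs x T f hf => ?_⟩
  rcases eq_or_ne T ∞ with rfl | hT
  · simp
  lift T to ℝ≥0 using hT
  have htranslate : eLpNorm (fun y => eexp (-δ * |y - x|)) p volume = I := by
    rw [hI]
    exact eLpNorm_comp_of_measurePreserving (measurePreserving_sub_right volume x)
      (measurableEmbedding_subRight x) fun y => eexp (-δ * |y|)
  calc eLpNorm f p (volume.restrict s)
      ≤ T * eLpNorm (fun y => eexp (-δ * |y - x|)) p (volume.restrict s) :=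
        eLpNorm_le_mul_eLpNorm ((ae_restrict_iff' hs).2 (ae_of_all _ hf))
    _ ≤ T * I := by
      rw [← htranslate]
      gcongr
      exact Measure.restrict_le_self
    _ ≤ (I + 1 : ℝ≥0) * T := by
      rw [mul_comm]
      gcongr
      exact le_self_add

lemma LocallyComparable.exists_le_eLpNorm_Ioo {ι : Type*} {F : ι → ℝ → ℝ≥0∞} {p : ℝ≥0∞}
    (hF : LocallyComparable F) (hp : p ≠ 0) :
    ∃ C : ℝ≥0, ∀ i x z, |x - z| ≤ 1 →
      F i x ≤ C * eLpNorm (F i) p (volume.restrict (Ioo z (z + 1))) := by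
  obtain ⟨C, hC⟩ := hF 2
  refine ⟨C, fun i x z hxz => ?_⟩
  have hvol : volume.restrict (Ioo z (z + 1)) univ = 1 := by simp
  have hne : volume.restrict (Ioo z (z + 1)) ≠ 0 := fun h => by simp [h] at hvol
  calc F i x = eLpNorm (fun _ => F i x) p (volume.restrict (Ioo z (z + 1))) := by
        rw [eLpNorm_const _ hp hne, hvol, ENNReal.one_rpow, mul_one, enorm_eq_self]
    _ ≤ C * eLpNorm (F i) p (volume.restrict (Ioo z (z + 1))) :=
        eLpNorm_le_mul_eLpNorm (ae_restrict_of_forall_mem measurableSet_Ioo fun y hy =>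
          hC i x y ?_)
  calc |x - y| ≤ |x - z| + |z - y| := abs_sub_le _ _ _
    _ ≤ 1 + 1 := by
      refine add_le_add hxz ?_
      rw [abs_sub_comm, abs_of_pos (sub_pos.2 hy.1)]
      linarith [hy.2]
    _ = 2 := one_add_one_eq_two

end ExpDecay

section LogTail

variable {r : ℝ≥0∞} {p : ℝ} {b : ℝ → ℝ}

lemma AlmostLinear.exists_eLpNorm_Ioi_le (hb : AlmostLinear p b) {ε : ℝ} (hε : 0 < ε) :
    ∃ M, ∀ (r : ℝ≥0∞) x y, eLpNorm (fun s => eexp (b s)) r (volume.restrict (Ioi x)) ≤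
      eexp (p * (x - y) + (ε * |x - y| + M)) *
        eLpNorm (fun s => eexp (b s)) r (volume.restrict (Ioi y)) := by
  obtain ⟨M, hM⟩ := hb ε hε
  refine ⟨M, fun r x y => ?_⟩
  have htranslate : eLpNorm (fun s => eexp (b s)) r (volume.restrict (Ioi x)) =
      eLpNorm (fun s => eexp (b (s + (x - y)))) r (volume.restrict (Ioi y)) := by
    have hpre : (fun s => s + (x - y)) ⁻¹' Ioi x = Ioi y := by ext s; simp
    have hmap := (measurePreserving_add_right volume (x - y)).restrict_preimage
      (measurableSet_Ioi (a := x))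
    rw [hpre] at hmap
    exact (eLpNorm_comp_of_measurePreserving hmap (measurableEmbedding_addRight (x - y)) _).symm
  rw [htranslate]
  refine eLpNorm_le_mul_eLpNorm (C := (Real.exp _).toNNReal) (ae_of_all _ fun s => ?_)
  calc eexp (b (s + (x - y))) ≤ eexp (p * (x - y) + (ε * |x - y| + M) + b s) := by
        have := (abs_le.1 (hM (s + (x - y)) s)).2
        rw [add_sub_cancel_left] at this
        exact eexp_mono (by linarith)
    _ = _ := eexp_add _ _

/-- The logarithm of the tail norm `‖t ^ (-1/r) * β t‖_{r,(exp x,∞)}`, where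
`β (exp x) = exp (b x)`. -/
def logTail (r : ℝ≥0∞) (b : ℝ → ℝ) (x : ℝ) : ℝ :=
  Real.log (eLpNorm (fun s => eexp (b s)) r (volume.restrict (Ioi x))).toReal

lemma AlmostLinear.exists_eexp_le_eLpNorm_Ioi (hb : AlmostLinear p b) (hr : r ≠ 0) :
    ∃ C : ℝ≥0, ∀ x, eexp (b x) ≤ C * eLpNorm (fun s => eexp (b s)) r (volume.restrict (Ioi x)) := by
  obtain ⟨C, hC⟩ := (hb.locallyComparable (ι := Unit)).exists_le_eLpNorm_Ioo hr
  refine ⟨C, fun x => (hC () x x (by simp)).trans ?_⟩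
  gcongr
  exact Ioo_subset_Ioi_self

lemma eexp_logTail (hb : AlmostLinear p b) (hr : r ≠ 0)
    (hfin : eLpNorm (fun s => eexp (b s)) r (volume.restrict (Ioi 0)) ≠ ∞) (x : ℝ) :
    eexp (logTail r b x) = eLpNorm (fun s => eexp (b s)) r (volume.restrict (Ioi x)) := by
  obtain ⟨M, hM⟩ := hb.exists_eLpNorm_Ioi_le one_pos
  obtain ⟨C, hC⟩ := hb.exists_eexp_le_eLpNorm_Ioi hr
  have htop := ne_top_of_le_ne_top (ENNReal.mul_ne_top (eexp_ne_top _) hfin) (hM r x 0)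
  have hzero : eLpNorm (fun s => eexp (b s)) r (volume.restrict (Ioi x)) ≠ 0 := fun h => by
    simpa [h, eexp_ne_zero] using hC x
  rw [logTail, eexp_log (ENNReal.toReal_pos hzero htop), ENNReal.ofReal_toReal htop]

lemma almostLinear_logTail (hb : AlmostLinear p b) (hr : r ≠ 0)
    (hfin : eLpNorm (fun s => eexp (b s)) r (volume.restrict (Ioi 0)) ≠ ∞) :
    AlmostLinear p (logTail r b) := by
  intro ε hε
  obtain ⟨M, hM⟩ := hb.exists_eLpNorm_Ioi_le hε
  have h : ∀ x y, logTail r b x - logTail r b y - p * (x - y) ≤ ε * |x - y| + M := by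
    intro x y
    have := hM r x y
    rw [← eexp_logTail hb hr hfin, ← eexp_logTail hb hr hfin, ← eexp_add, eexp_le_eexp_iff] at this
    linarith
  refine ⟨M, fun x y => abs_le.2 ⟨?_, h x y⟩⟩
  have := h y x
  rw [abs_sub_comm] at this
  linarith

lemma exists_le_logTail_add (hb : AlmostLinear p b) (hr : r ≠ 0)
    (hfin : eLpNorm (fun s => eexp (b s)) r (volume.restrict (Ioi 0)) ≠ ∞) :
    ∃ M, ∀ x, b x ≤ logTail r b x + M := by
  obtain ⟨C, hC⟩ := hb.exists_eexp_le_eLpNorm_Ioi hr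
  refine ⟨Real.log (C + 1), fun x => eexp_le_eexp_iff.1 ((hC x).trans ?_)⟩
  rw [eexp_add, eexp_logTail hb hr hfin, eexp_log (by positivity), mul_comm]
  gcongr
  rw [← ENNReal.ofReal_coe_nnreal]
  exact ENNReal.ofReal_le_ofReal (by simp)

end LogTail

section Hardy

variable {ι : Type*} {G H : ι → ℝ → ℝ≥0∞} {p : ℝ≥0∞} {δ : ℝ}

/-- The least function `S ≥ F` that grows at least like `eexp (ε * x)` if `ε > 0`, and decays at
most that fast if `ε < 0`. -/
def leftSup (ε : ℝ) (F : ℝ → ℝ≥0∞) (x : ℝ) : ℝ≥0∞ := ⨆ u ∈ Iic x, eexp (ε * (x - u)) * F u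

lemma mul_le_leftSup (ε : ℝ) (F : ℝ → ℝ≥0∞) {u x : ℝ} (hux : u ≤ x) :
    eexp (ε * (x - u)) * F u ≤ leftSup ε F x :=
  le_iSup₂ (f := fun u (_ : u ∈ Iic x) => eexp (ε * (x - u)) * F u) u hux

lemma le_leftSup (ε : ℝ) (F : ℝ → ℝ≥0∞) (x : ℝ) : F x ≤ leftSup ε F x := by
  simpa [eexp_zero] using mul_le_leftSup ε F (le_refl x)

lemma AlmostLinear.exists_eexp_mul_leftSup_le {m ε ε' : ℝ} {φ : ℝ → ℝ} (hφ : AlmostLinear m φ)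
    (h : m + ε < ε') :
    ∃ C : ℝ≥0, ∀ F x,
      eexp (φ x) * leftSup ε F x ≤ C * leftSup ε' (fun u => eexp (φ u) * F u) x := by
  obtain ⟨M, hM⟩ := hφ.exists_sub_le (lt_sub_iff_add_lt.2 h)
  refine ⟨(Real.exp M).toNNReal, fun F x => ?_⟩
  change eexp (φ x) * leftSup ε F x ≤ eexp M * _
  simp only [leftSup, ENNReal.mul_iSup]
  refine iSup₂_mono fun u hu => ?_
  simp only [← mul_assoc, ← eexp_add]
  gcongr
  refine eexp_mono ?_
  linarith [hM x u hu]

lemma iSup_rpow_le_tsum_rpow {κ : Type*} (f : κ → ℝ≥0∞) {s : ℝ} (hs : 0 < s) :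
    (⨆ j, f j) ^ s ≤ ∑' j, f j ^ s := by
  rw [show (⨆ j, f j) ^ s = ⨆ j, f j ^ s from (ENNReal.orderIsoRpow s hs).map_iSup f]
  exact iSup_le fun j => ENNReal.le_tsum j

lemma tsum_eexp_neg_mul_ne_top (hδ : 0 < δ) : ∑' j : ℕ, eexp (-δ * j) ≠ ∞ := by
  have hpow : ∀ j : ℕ, eexp (-δ * j) = eexp (-δ) ^ j := fun j => by
    rw [← eexp_rpow, ENNReal.rpow_natCast]
  have hlt : eexp (-δ) < 1 := by
    rw [← eexp_zero, lt_iff_not_ge, eexp_le_eexp_iff]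
    linarith
  simp only [hpow, ENNReal.tsum_geometric]
  exact ENNReal.inv_ne_top.2 (tsub_pos_of_lt hlt).ne'

lemma tsum_iSup_exp_decay_rpow_le (g : ℤ → ℝ≥0∞) {s : ℝ} (hs : 0 < s) :
    ∑' n, (⨆ j : ℕ, eexp (-δ * j) * g (n - j)) ^ s ≤
      (∑' j : ℕ, eexp (-(δ * s) * j)) * ∑' n, g n ^ s :=
  calc ∑' n, (⨆ j : ℕ, eexp (-δ * j) * g (n - j)) ^ s
      ≤ ∑' n, ∑' j : ℕ, (eexp (-δ * j) * g (n - j)) ^ s :=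
        ENNReal.tsum_le_tsum fun n => iSup_rpow_le_tsum_rpow _ hs
    _ = ∑' j : ℕ, eexp (-(δ * s) * j) * ∑' n, g (n - j) ^ s := by
      rw [ENNReal.tsum_comm]
      refine tsum_congr fun j => ?_
      rw [← ENNReal.tsum_mul_left]
      refine tsum_congr fun n => ?_
      rw [ENNReal.mul_rpow_of_nonneg _ _ hs.le, eexp_rpow]
      ring_nf
    _ = (∑' j : ℕ, eexp (-(δ * s) * j)) * ∑' n, g n ^ s := by
      rw [← ENNReal.tsum_mul_right]
      exact tsum_congr fun j =>
        congrArg _ ((Equiv.subRight (j : ℤ)).tsum_eq fun n => g n ^ s)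

lemma exists_eLpNorm_count_iSup_exp_decay_le (hδ : 0 < δ) (p : ℝ≥0∞) :
    ∃ C : ℝ≥0, ∀ g : ℤ → ℝ≥0∞,
      eLpNorm (fun n => ⨆ j : ℕ, eexp (-δ * j) * g (n - j)) p Measure.count ≤
        C * eLpNorm g p Measure.count := by
  rcases eq_or_ne p 0 with rfl | hp
  · exact ⟨0, by simp⟩
  rcases eq_or_ne p ∞ with rfl | hp'
  · refine ⟨1, fun g => ?_⟩
    simp only [eLpNorm_exponent_top, eLpNormEssSup_count, enorm_eq_self, ENNReal.coe_one, one_mul]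
    refine iSup_le fun n => iSup_le fun j => (mul_le_of_le_one_left' ?_).trans (le_iSup g _)
    refine (eexp_mono ?_).trans eexp_zero.le
    nlinarith [(Nat.cast_nonneg j : (0 : ℝ) ≤ j)]
  have hs := ENNReal.toReal_pos hp hp'
  lift ∑' j : ℕ, eexp (-(δ * p.toReal) * j) to ℝ≥0
    using tsum_eexp_neg_mul_ne_top (mul_pos hδ hs) with D hD
  refine ⟨D ^ (1 / p.toReal), fun g => ?_⟩
  simp only [eLpNorm_eq_lintegral_rpow_enorm_toReal hp hp', lintegral_count, enorm_eq_self]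
  rw [ENNReal.coe_rpow_of_nonneg _ (by positivity),
    ← ENNReal.mul_rpow_of_nonneg _ _ (by positivity),
    hD]
  gcongr
  exact tsum_iSup_exp_decay_rpow_le g hs

lemma LocallyComparable.exists_leftSup_le (hG : LocallyComparable G) (hδ : 0 ≤ δ) :
    ∃ C : ℝ≥0, ∀ i (n : ℤ), leftSup (-δ) (G i) n ≤
      C * ⨆ j : ℕ, eexp (-δ * j) * G i ↑(n - j : ℤ) := by
  obtain ⟨C, hC⟩ := hG 1
  refine ⟨C, fun i n => iSup₂_le fun u hu => ?_⟩
  have hu₀ : 0 ≤ n - u := sub_nonneg.2 hu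
  have hle := Nat.floor_le hu₀
  have hlt := Nat.lt_floor_add_one (n - u)
  set j := ⌊(n : ℝ) - u⌋₊
  calc eexp (-δ * (n - u)) * G i u ≤ eexp (-δ * j) * (C * G i ↑(n - j : ℤ)) := by
        refine mul_le_mul' (eexp_mono (by nlinarith)) (hC i _ _ (abs_le.2 ?_))
        push_cast
        constructor <;> linarith
    _ = C * (eexp (-δ * j) * G i ↑(n - j : ℤ)) := by ring
    _ ≤ _ := by
      gcongr
      exact le_iSup (fun j : ℕ => eexp (-δ * j) * G i ↑(n - j : ℤ)) j

lemma LocallyComparable.eLpNorm_dominated_of_le_leftSup (hH : LocallyComparable H)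
    (hG : LocallyComparable G) (hδ : 0 < δ) {C : ℝ≥0}
    (h : ∀ i x, H i x ≤ C * leftSup (-δ) (G i) x) :
    (fun i => eLpNorm (H i) p volume) ≲ fun i => eLpNorm (G i) p volume := by
  obtain ⟨D, hD⟩ := hG.exists_leftSup_le hδ.le
  obtain ⟨C', hC'⟩ := exists_eLpNorm_count_iSup_exp_decay_le hδ p
  calc (fun i => eLpNorm (H i) p volume)
      ≲ fun i => eLpNorm (fun n : ℤ => H i n) p Measure.count := hH.eLpNorm_volume_dominated
    _ ≲ fun i => eLpNorm (fun n : ℤ => ⨆ j : ℕ, eexp (-δ * j) * G i ↑(n - j)) p Measure.count := by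
      refine Dominated.eLpNorm ⟨C * D, fun ⟨i, n⟩ => (h i n).trans ?_⟩
      rw [ENNReal.coe_mul, mul_assoc]
      gcongr
      exact hD i n
    _ ≲ fun i => eLpNorm (fun n : ℤ => G i n) p Measure.count := ⟨C', fun i => hC' fun n => G i n⟩
    _ ≲ fun i => eLpNorm (G i) p volume := hG.eLpNorm_count_dominated

end Hardy

section LogCoordinates

variable {V : Type*} [AddCommGroup V] {q r : ℝ≥0∞}

lemma map_exp_withDensity {s : Set ℝ} (hs : MeasurableSet s) :
    ((volume.restrict s).withDensity eexp).map Real.exp = volume.restrict (Real.exp '' s) := by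
  rw [← map_withDensity_abs_det_fderiv_eq_addHaar volume hs.nullMeasurableSet
    (fun x _ => (Real.hasDerivAt_exp x).hasDerivWithinAt.hasFDerivWithinAt)
    Real.exp_injective.injOn]
  simp only [ContinuousLinearMap.det_toSpanSingleton, Real.abs_exp]
  rfl

lemma essSup_image_exp {s : Set ℝ} (hs : MeasurableSet s) (G : ℝ → ℝ≥0∞) :
    essSup G (volume.restrict (Real.exp '' s)) =
      essSup (fun x => G (Real.exp x)) (volume.restrict s) := by
  have hmeas : Measurable eexp := Real.measurable_exp.ennreal_ofReal
  rw [← map_exp_withDensity hs,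
    (Real.continuous_exp.measurableEmbedding Real.exp_injective).essSup_map_measure]
  exact (essSup_mono_measure (withDensity_absolutelyContinuous _ _)).antisymm
    (essSup_mono_measure (withDensity_absolutelyContinuous' hmeas.aemeasurable
      (ae_of_all _ eexp_ne_zero)))

lemma LqNorm_image_exp (hq : q ≠ 0) {s : Set ℝ} (hs : MeasurableSet s) (G : ℝ → ℝ≥0∞) :
    LqNorm q (Real.exp '' s) G =
      eLpNorm (fun x => eexp (x * q⁻¹.toReal) * G (Real.exp x)) q (volume.restrict s) := by
  rcases eq_or_ne q ∞ with rfl | hq'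
  · simp [LqNorm, essSup_image_exp hs, eLpNormEssSup, eexp_zero]
  have hq₀ := ENNReal.toReal_pos hq hq'
  rw [LqNorm, if_neg hq', eLpNorm_eq_lintegral_rpow_enorm_toReal hq hq',
    lintegral_image_eq_lintegral_abs_deriv_mul hs
      (fun x _ => (Real.hasDerivAt_exp x).hasDerivWithinAt) Real.exp_injective.injOn,
    ENNReal.toReal_inv, one_div]
  congr 1
  refine lintegral_congr fun x => ?_
  rw [Real.abs_exp, enorm_eq_self, ENNReal.mul_rpow_of_nonneg _ _ hq₀.le, eexp_rpow,
    inv_mul_cancel_right₀ hq₀.ne', eexp]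

lemma ofReal_exp_rpow_mul {c φ : ℝ → ℝ} (hc : ∀ x, c (Real.exp x) = Real.exp (φ x)) (σ x : ℝ) :
    ENNReal.ofReal (Real.exp x ^ σ * c (Real.exp x)) = eexp (x * σ + φ x) := by
  rw [hc, ← Real.exp_mul, ← Real.exp_add, eexp]

lemma LqNorm_Ioi_svWgt (hq : q ≠ 0) {c φ : ℝ → ℝ} (hc : ∀ x, c (Real.exp x) = Real.exp (φ x))
    (x : ℝ) : LqNorm q (Ioi (Real.exp x)) (svWgt q c) =
      eLpNorm (fun s => eexp (φ s)) q (volume.restrict (Ioi x)) := by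
  rw [← Real.image_exp_Ioi, LqNorm_image_exp hq measurableSet_Ioi]
  refine congrArg (eLpNorm · q _) (funext fun s => ?_)
  rw [svWgt, ofReal_exp_rpow_mul hc, ← eexp_add]
  ring_nf

lemma normK_eq_eLpNorm (hq : q ≠ 0) (N₀ N₁ : V → ℝ≥0∞) (θ : ℝ) {c φ : ℝ → ℝ}
    (hc : ∀ x, c (Real.exp x) = Real.exp (φ x)) (f : V) :
    normK N₀ N₁ θ q c f =
      eLpNorm (fun x => eexp (φ x - θ * x) * Kf N₀ N₁ (Real.exp x) f) q volume := by
  rw [normK, ← Real.range_exp, ← image_univ, LqNorm_image_exp hq MeasurableSet.univ,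
    Measure.restrict_univ]
  refine congrArg (eLpNorm · q _) (funext fun x => ?_)
  rw [ofReal_exp_rpow_mul hc, ← mul_assoc, ← eexp_add]
  ring_nf

/-- The quasi-norm `normL` in the coordinates `t = exp x`, as a functional of `x ↦ K (exp x, f)`;
see `normL_eq_limitingNorm`. -/
def limitingNorm (r q : ℝ≥0∞) (b w : ℝ → ℝ) (κ : ℝ → ℝ≥0∞) : ℝ≥0∞ :=
  eLpNorm (fun x => eexp (b x) *
    eLpNorm (fun y => eexp (w y) * κ y) q (volume.restrict (Iio x))) r volume

lemma normL_eq_limitingNorm (hr : r ≠ 0) (hq : q ≠ 0) (N₀ N₁ : V → ℝ≥0∞) (σ : ℝ)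
    {a b α β : ℝ → ℝ} (ha : ∀ x, a (Real.exp x) = Real.exp (α x))
    (hb : ∀ x, b (Real.exp x) / a (Real.exp x) = Real.exp (β x)) (f : V) :
    normL N₀ N₁ σ r q b a f =
      limitingNorm r q β (fun y => α y - σ * y) fun y => Kf N₀ N₁ (Real.exp y) f := by
  rw [normL, limitingNorm, ← Real.range_exp, ← image_univ, LqNorm_image_exp hr MeasurableSet.univ,
    Measure.restrict_univ]
  refine congrArg (eLpNorm · r _) (funext fun x => ?_)
  rw [ofReal_exp_rpow_mul (c := fun t => b t / a t) hb, ← mul_assoc, ← eexp_add,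
    ← Real.image_exp_Iio, LqNorm_image_exp hq measurableSet_Iio]
  congr 2
  · ring
  · refine funext fun y => ?_
    rw [ofReal_exp_rpow_mul ha, ← mul_assoc, ← eexp_add]
    ring_nf

lemma EquivOn.exists_le_mul {s : Set ℝ} {f g : ℝ → ℝ} (h : EquivOn s f g) :
    ∃ C, 0 < C ∧ ∀ x ∈ s, ∀ y ∈ s, g x ≤ g y → f x ≤ C * f y := by
  obtain ⟨C, hC, h⟩ := h
  refine ⟨C * C, mul_pos hC hC, fun x hx y hy hxy => ?_⟩
  calc f x ≤ C * g x := (h x hx).2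
    _ ≤ C * g y := by gcongr
    _ ≤ C * (C * f y) := by
      gcongr
      exact (inv_mul_le_iff₀ hC).1 (h y hy).1
    _ = C * C * f y := (mul_assoc _ _ _).symm

lemma SlowlyVarying.exp_log {b : ℝ → ℝ} (hb : SlowlyVarying b) (x : ℝ) :
    b (Real.exp x) = Real.exp (Real.log (b (Real.exp x))) :=
  (Real.exp_log (hb.2.1 _ x.exp_pos)).symm

lemma SlowlyVarying.almostLinear {b : ℝ → ℝ} (hb : SlowlyVarying b) :
    AlmostLinear 0 fun x => Real.log (b (Real.exp x)) := by
  intro ε hε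
  obtain ⟨⟨g, hg, hbg⟩, g', hg', hbg'⟩ := hb.2.2 ε hε
  obtain ⟨C, hC₀, hC⟩ := hbg.exists_le_mul
  obtain ⟨D, hD₀, hD⟩ := hbg'.exists_le_mul
  have key : ∀ {σ C x y : ℝ}, 0 < C → Real.exp x ^ σ * b (Real.exp x) ≤
      C * (Real.exp y ^ σ * b (Real.exp y)) →
      Real.log (b (Real.exp x)) - Real.log (b (Real.exp y)) ≤ σ * (y - x) + Real.log C := by
    intro σ C x y hC h
    rw [hb.exp_log x, hb.exp_log y, ← Real.exp_mul, ← Real.exp_mul, ← Real.exp_log hC,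
      ← Real.exp_add, ← Real.exp_add, ← Real.exp_add, Real.exp_le_exp] at h
    linarith
  refine ⟨max (Real.log C) (Real.log D), fun x y => ?_⟩
  wlog hyx : y ≤ x generalizing x y
  · simpa only [abs_sub_comm, zero_mul, sub_zero] using this y x (le_of_not_ge hyx)
  have hyx' := Real.exp_le_exp.2 hyx
  have h₁ := key hC₀ (hC _ y.exp_pos _ x.exp_pos (hg y.exp_pos x.exp_pos hyx'))
  have h₂ := key hD₀ (hD _ x.exp_pos _ y.exp_pos (hg' y.exp_pos x.exp_pos hyx'))
  rw [zero_mul, sub_zero, abs_le, abs_of_nonneg (sub_nonneg.2 hyx)]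
  constructor
  · linarith [le_max_left (Real.log C) (Real.log D)]
  · linarith [le_max_right (Real.log C) (Real.log D)]

end LogCoordinates

section KFunctional

variable {V : Type*} [AddCommGroup V] {N₀ N₁ : V → ℝ≥0∞}

/-- The properties of the quasi-norm of `A₁` that the argument uses: an even function vanishing
at `0` that satisfies the quasi-triangle inequality. -/
structure IsGroupQuasiSeminorm (N : V → ℝ≥0∞) : Prop where
  map_zero : N 0 = 0
  map_neg : ∀ x, N (-x) = N x
  exists_map_add_le : ∃ C : ℝ≥0, ∀ x y, N (x + y) ≤ C * (N x + N y)

lemma QuasiBanach.isGroupQuasiSeminorm (A : QuasiBanach E) : IsGroupQuasiSeminorm A.N where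
  map_zero := A.zero
  map_neg x := by simpa using A.smul (-1) x
  exists_map_add_le := by
    obtain ⟨C, -, hC, h⟩ := A.quasi
    lift C to ℝ≥0 using hC
    exact ⟨C, h⟩

lemma le_mul_Kf {c m : ℝ≥0∞} (hc : c ≠ ∞) {t : ℝ} {f : V}
    (h : ∀ g, m ≤ c * (N₀ g + ENNReal.ofReal t * N₁ (f - g))) : m ≤ c * Kf N₀ N₁ t f := by
  rw [Kf, ENNReal.mul_iInf' (fun h => absurd h hc) (fun _ => ⟨0⟩)]
  exact le_iInf h

lemma IsGroupQuasiSeminorm.Kf_le (hN₁ : IsGroupQuasiSeminorm N₁) (t : ℝ) (f : V) :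
    Kf N₀ N₁ t f ≤ N₀ f :=
  (iInf_le _ f).trans_eq (by rw [sub_self, hN₁.map_zero, mul_zero, add_zero])

lemma IsGroupQuasiSeminorm.exists_Kf_le_add (hN₁ : IsGroupQuasiSeminorm N₁) :
    ∃ C : ℝ≥0, ∀ N₀ t f g,
      Kf N₀ N₁ t f ≤ C * (Kf N₀ N₁ t g + ENNReal.ofReal t * N₁ (f - g)) := by
  obtain ⟨C, hC⟩ := hN₁.exists_map_add_le
  refine ⟨C + 1, fun N₀ t f g => ?_⟩
  rw [Kf, Kf, ENNReal.iInf_add, ENNReal.mul_iInf' (fun h => absurd h coe_ne_top) fun _ => ⟨0⟩]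
  refine iInf_mono fun h => ?_
  calc N₀ h + ENNReal.ofReal t * N₁ (f - h)
      ≤ N₀ h + ENNReal.ofReal t * (C * (N₁ (f - g) + N₁ (g - h))) := by
        gcongr
        simpa using hC (f - g) (g - h)
    _ = N₀ h + C * (ENNReal.ofReal t * N₁ (g - h) + ENNReal.ofReal t * N₁ (f - g)) := by ring
    _ ≤ ↑(C + 1) * N₀ h +
        ↑(C + 1) * (ENNReal.ofReal t * N₁ (g - h) + ENNReal.ofReal t * N₁ (f - g)) := by
      gcongr
      · exact le_mul_of_one_le_left' (by simp)
      · simp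
    _ = _ := by ring

lemma Kf_mono {s t : ℝ} (hst : s ≤ t) (f : V) : Kf N₀ N₁ s f ≤ Kf N₀ N₁ t f :=
  iInf_mono fun g => by gcongr

lemma Kf_exp_le {x y : ℝ} (hyx : y ≤ x) (f : V) :
    Kf N₀ N₁ (Real.exp x) f ≤ eexp (x - y) * Kf N₀ N₁ (Real.exp y) f := by
  refine le_mul_Kf (eexp_ne_top _) fun g => (iInf_le _ g).trans ?_
  calc N₀ g + eexp x * N₁ (f - g)
      ≤ eexp (x - y) * N₀ g + eexp (x - y) * (eexp y * N₁ (f - g)) := by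
        rw [← mul_assoc, ← eexp_add, sub_add_cancel]
        gcongr
        refine le_mul_of_one_le_left' ?_
        rw [← eexp_zero, eexp_le_eexp_iff]
        exact sub_nonneg.2 hyx
    _ = _ := (mul_add _ _ _).symm

lemma locallyComparable_Kf (N₀ N₁ : V → ℝ≥0∞) :
    LocallyComparable fun (f : V) x => Kf N₀ N₁ (Real.exp x) f := by
  refine fun d => ⟨(Real.exp d).toNNReal, fun f x y hxy => ?_⟩
  change Kf N₀ N₁ (Real.exp x) f ≤ eexp d * Kf N₀ N₁ (Real.exp y) f
  rcases le_total y x with h | h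
  · exact (Kf_exp_le h f).trans (mul_le_mul_left (eexp_mono (le_of_abs_le hxy)) _)
  · refine (Kf_mono (Real.exp_le_exp.2 h) f).trans (le_mul_of_one_le_left' ?_)
    rw [← eexp_zero, eexp_le_eexp_iff]
    exact (abs_nonneg _).trans hxy

end KFunctional

section LimitingNorm

variable {r q : ℝ≥0∞} {b w B : ℝ → ℝ} {m ε : ℝ}

lemma exists_eLpNorm_le_Iic_add_Ioi (p : ℝ≥0∞) :
    ∃ C : ℝ≥0, ∀ (f : ℝ → ℝ≥0∞) (x : ℝ), eLpNorm f p volume ≤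
      C * (eLpNorm f p (volume.restrict (Iic x)) + eLpNorm f p (volume.restrict (Ioi x))) := by
  obtain ⟨C, hC⟩ := eLpNorm_add_measure_le (α := ℝ) p
  refine ⟨C, fun f x => ?_⟩
  have h := hC (volume.restrict (Iic x)) (volume.restrict (Ioi x)) f
  rwa [← compl_Iic, Measure.restrict_add_restrict_compl measurableSet_Iic, compl_Iic] at h

lemma exists_eexp_logTail_mul_le_limitingNorm {ι : Type*} {κ : ι → ℝ → ℝ≥0∞}
    (hκ : LocallyComparable κ) (hw : AlmostLinear m w) {p : ℝ} (hb : AlmostLinear p b)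
    (hr : r ≠ 0) (hq : q ≠ 0)
    (hfin : eLpNorm (fun s => eexp (b s)) r (volume.restrict (Ioi 0)) ≠ ∞) :
    ∃ C : ℝ≥0, ∀ i x,
      eexp (w x + logTail r b x) * κ i x ≤ C * limitingNorm r q b w (κ i) := by
  obtain ⟨C, hC⟩ := (hw.locallyComparable.mul hκ).exists_le_eLpNorm_Ioo hq
  refine ⟨C, fun i x => ?_⟩
  set J : ℝ → ℝ≥0∞ := fun s => eLpNorm (fun y => eexp (w y) * κ i y) q (volume.restrict (Iio s))
  have hJ_mono : Monotone J := fun s t hst =>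
    eLpNorm_mono_measure _ (Measure.restrict_mono (Iio_subset_Iio hst) le_rfl)
  have hκJ : eexp (w x) * κ i x ≤ C * J x := by
    refine (hC i x (x - 1) (by simp)).trans ?_
    gcongr
    refine eLpNorm_mono_measure _ (Measure.restrict_mono (fun y hy => ?_) le_rfl)
    exact hy.2.trans_eq (sub_add_cancel x 1)
  calc eexp (w x + logTail r b x) * κ i x
      = eexp (logTail r b x) * (eexp (w x) * κ i x) := by rw [add_comm, eexp_add, mul_assoc]
    _ ≤ eexp (logTail r b x) * (C * J x) := by gcongr
    _ = C * (J x * eLpNorm (fun s => eexp (b s)) r (volume.restrict (Ioi x))) := by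
      rw [eexp_logTail hb hr hfin]
      ring
    _ ≤ C * eLpNorm (fun s => J x * eexp (b s)) r (volume.restrict (Ioi x)) := by
      gcongr
      exact mul_eLpNorm_le_eLpNorm_mul _ _
    _ ≤ C * eLpNorm (fun s => eexp (b s) * J s) r (volume.restrict (Ioi x)) := by
      gcongr
      refine eLpNorm_mono_enorm_ae (ae_restrict_of_forall_mem measurableSet_Ioi fun s hs => ?_)
      simp only [enorm_eq_self, mul_comm (J x)]
      gcongr
      exact hJ_mono (mem_Ioi.1 hs).le
    _ ≤ C * limitingNorm r q b w (κ i) := by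
      gcongr
      exact eLpNorm_mono_measure _ Measure.restrict_le_self

lemma AlmostLinear.exists_eLpNorm_Iic_le (hB : AlmostLinear 0 B) (hε : 0 < ε) (q : ℝ≥0∞) :
    ∃ C : ℝ≥0, ∀ (W : ℝ → ℝ≥0∞) (x : ℝ) (T : ℝ≥0∞),
      (∀ y ≤ x, eexp (B y + ε * (x - y)) * W y ≤ T) → ∀ s ≤ x,
        eLpNorm W q (volume.restrict (Iic s)) ≤ C * (eexp (-(B s + ε * (x - s))) * T) := by
  obtain ⟨M, hM⟩ := hB.exists_sub_le (half_pos hε)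
  obtain ⟨C, hC⟩ := exists_eLpNorm_le_of_le_exp_decay (half_pos hε) q
  refine ⟨C * (Real.exp M).toNNReal, fun W x T hW s hs => ?_⟩
  calc eLpNorm W q (volume.restrict (Iic s))
      ≤ C * (eexp M * (eexp (-(B s + ε * (x - s))) * T)) := by
        refine hC _ measurableSet_Iic s _ W fun y hy => ?_
        refine (eexp_mul_le_iff.1 (hW y (hy.trans hs))).trans ?_
        rw [abs_of_nonpos (sub_nonpos.2 hy), ← mul_assoc, mul_right_comm, ← eexp_add, ← eexp_add]
        gcongr
        refine eexp_mono ?_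
        linarith [hM s y hy]
    _ = _ := by
      rw [ENNReal.coe_mul, mul_assoc]
      rfl

lemma exists_eLpNorm_mul_le (hm : m < 0) (hw : AlmostLinear m w) (hB : AlmostLinear 0 B)
    (hε : 0 < ε) (q : ℝ≥0∞) :
    ∃ C : ℝ≥0, ∀ (κ : ℝ → ℝ≥0∞) (x : ℝ) (T : ℝ≥0∞),
      (∀ y ≤ x, eexp (w y + B y + ε * (x - y)) * κ y ≤ T) →
      (∀ y, x ≤ y → eexp (w x + B x) * κ y ≤ T) →
        eLpNorm (fun y => eexp (w y) * κ y) q volume ≤ C * (eexp (-B x) * T) := by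
  obtain ⟨C₀, hC₀⟩ := exists_eLpNorm_le_Iic_add_Ioi q
  obtain ⟨C₁, hC₁⟩ := hB.exists_eLpNorm_Iic_le hε q
  obtain ⟨M, hM⟩ := hw.exists_sub_le (show m < m / 2 by linarith)
  obtain ⟨C₂, hC₂⟩ := exists_eLpNorm_le_of_le_exp_decay (show 0 < -(m / 2) by linarith) q
  refine ⟨C₀ * (C₁ + C₂ * (Real.exp M).toNNReal), fun κ x T hleft hright => ?_⟩
  have hIic : eLpNorm (fun y => eexp (w y) * κ y) q (volume.restrict (Iic x)) ≤
      C₁ * (eexp (-B x) * T) := by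
    have h := hC₁ (fun y => eexp (w y) * κ y) x T (fun y hy => ?_) x le_rfl
    · rwa [sub_self, mul_zero, add_zero] at h
    · rw [← mul_assoc, ← eexp_add]
      convert hleft y hy using 3
      ring
  have hIoi : eLpNorm (fun y => eexp (w y) * κ y) q (volume.restrict (Ioi x)) ≤
      C₂ * (eexp M * (eexp (-B x) * T)) := by
    refine hC₂ _ measurableSet_Ioi x _ _ fun y hy => ?_
    have hxy : x ≤ y := (mem_Ioi.1 hy).le
    calc eexp (w y) * κ y ≤ eexp (w y) * (eexp (-(w x + B x)) * T) := by
          gcongr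
          exact eexp_mul_le_iff.1 (hright y hxy)
      _ ≤ eexp M * (eexp (-B x) * T) * eexp (- -(m / 2) * |y - x|) := by
        rw [abs_of_nonneg (sub_nonneg.2 hxy), ← mul_assoc, ← mul_assoc, mul_right_comm _ T,
          ← eexp_add, ← eexp_add, ← eexp_add]
        gcongr
        refine eexp_mono ?_
        linarith [hM y x hxy]
  calc eLpNorm (fun y => eexp (w y) * κ y) q volume
      ≤ C₀ * (C₁ * (eexp (-B x) * T) + C₂ * (eexp M * (eexp (-B x) * T))) :=
        (hC₀ _ x).trans (by gcongr)
    _ = _ := by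
      push_cast
      change _ = C₀ * (C₁ + C₂ * eexp M) * (eexp (-B x) * T)
      ring

lemma exists_eLpNorm_Iic_mul_le (hb : AlmostLinear 0 b) (hr : r ≠ 0)
    (hfin : eLpNorm (fun s => eexp (b s)) r (volume.restrict (Ioi 0)) ≠ ∞) (hε : 0 < ε) :
    ∃ C : ℝ≥0, ∀ (J : ℝ → ℝ≥0∞) (x : ℝ) (T : ℝ≥0∞),
      (∀ s ≤ x, J s ≤ eexp (-(logTail r b s + ε * (x - s))) * T) →
        eLpNorm (fun s => eexp (b s) * J s) r (volume.restrict (Iic x)) ≤ C * T := by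
  obtain ⟨M, hM⟩ := exists_le_logTail_add hb hr hfin
  obtain ⟨C, hC⟩ := exists_eLpNorm_le_of_le_exp_decay hε r
  refine ⟨C * (Real.exp M).toNNReal, fun J x T hJ => ?_⟩
  calc eLpNorm (fun s => eexp (b s) * J s) r (volume.restrict (Iic x))
      ≤ C * (eexp M * T) := by
        refine hC _ measurableSet_Iic x _ _ fun s hs => ?_
        refine (mul_le_mul' (eexp_mono (hM s)) (hJ s hs)).trans_eq ?_
        rw [abs_of_nonpos (sub_nonpos.2 hs), ← mul_assoc, mul_right_comm (eexp M), ← eexp_add,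
          ← eexp_add]
        ring_nf
    _ = _ := by
      rw [ENNReal.coe_mul, mul_assoc]
      rfl

lemma eLpNorm_Ioi_mul_le {p : ℝ} (hb : AlmostLinear p b) (hr : r ≠ 0)
    (hfin : eLpNorm (fun s => eexp (b s)) r (volume.restrict (Ioi 0)) ≠ ∞)
    {J : ℝ → ℝ≥0∞} {x : ℝ} {T : ℝ≥0} (hJ : ∀ s, J s ≤ eexp (-logTail r b x) * T) :
    eLpNorm (fun s => eexp (b s) * J s) r (volume.restrict (Ioi x)) ≤ T :=
  calc eLpNorm (fun s => eexp (b s) * J s) r (volume.restrict (Ioi x))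
      ≤ ((Real.exp (-logTail r b x)).toNNReal * T : ℝ≥0) *
          eLpNorm (fun s => eexp (b s)) r (volume.restrict (Ioi x)) := by
        refine eLpNorm_le_mul_eLpNorm (ae_of_all _ fun s => ?_)
        rw [mul_comm, ENNReal.coe_mul]
        gcongr
        exact hJ s
    _ = eexp (-logTail r b x) * eexp (logTail r b x) * T := by
      rw [eexp_logTail hb hr hfin, ENNReal.coe_mul, mul_right_comm]
      rfl
    _ = T := by rw [eexp_neg_mul_eexp, one_mul]

lemma exists_limitingNorm_le (hm : m < 0) (hw : AlmostLinear m w) (hb : AlmostLinear 0 b)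
    (hr : r ≠ 0) (hfin : eLpNorm (fun s => eexp (b s)) r (volume.restrict (Ioi 0)) ≠ ∞)
    (hε : 0 < ε) (q : ℝ≥0∞) :
    ∃ C : ℝ≥0, ∀ (κ : ℝ → ℝ≥0∞) (x : ℝ) (T : ℝ≥0∞),
      (∀ y ≤ x, eexp (w y + logTail r b y + ε * (x - y)) * κ y ≤ T) →
      (∀ y, x ≤ y → eexp (w x + logTail r b x) * κ y ≤ T) →
        limitingNorm r q b w κ ≤ C * T := by
  have hB := almostLinear_logTail hb hr hfin
  obtain ⟨C₀, hC₀⟩ := exists_eLpNorm_le_Iic_add_Ioi r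
  obtain ⟨C₁, hC₁⟩ := hB.exists_eLpNorm_Iic_le hε q
  obtain ⟨C₂, hC₂⟩ := exists_eLpNorm_mul_le hm hw hB hε q
  obtain ⟨C₃, hC₃⟩ := exists_eLpNorm_Iic_mul_le hb hr hfin hε
  refine ⟨C₀ * (C₃ * C₁ + C₂) + 1, fun κ x T hleft hright => ?_⟩
  rcases eq_or_ne T ∞ with rfl | hT
  · simp
  lift T to ℝ≥0 using hT
  set J : ℝ → ℝ≥0∞ := fun s => eLpNorm (fun y => eexp (w y) * κ y) q (volume.restrict (Iio s))
  have hJ_left : ∀ s ≤ x, J s ≤ eexp (-(logTail r b s + ε * (x - s))) * (C₁ * T) := fun s hs => by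
    rw [mul_left_comm]
    refine (eLpNorm_mono_measure _ (Measure.restrict_mono Iio_subset_Iic_self le_rfl)).trans
      (hC₁ _ x T (fun y hy => ?_) s hs)
    rw [← mul_assoc, ← eexp_add]
    convert hleft y hy using 3
    ring
  have hJ : ∀ s, J s ≤ eexp (-logTail r b x) * (C₂ * T : ℝ≥0) := fun s => by
    rw [ENNReal.coe_mul, mul_left_comm]
    exact (eLpNorm_mono_measure _ Measure.restrict_le_self).trans (hC₂ κ x T hleft hright)
  calc limitingNorm r q b w κ
      ≤ C₀ * (C₃ * (C₁ * T) + (C₂ * T : ℝ≥0)) := by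
        refine (hC₀ _ x).trans ?_
        gcongr
        exacts [hC₃ J x _ hJ_left, eLpNorm_Ioi_mul_le hb hr hfin hJ]
    _ = (C₀ * (C₃ * C₁ + C₂) : ℝ≥0) * T := by
      push_cast
      ring
    _ ≤ (C₀ * (C₃ * C₁ + C₂) + 1 : ℝ≥0) * T := by
      gcongr
      exact le_self_add

end LimitingNorm

section KFunctionalLimiting

variable {V : Type*} [AddCommGroup V] {N₁ : V → ℝ≥0∞} {r q : ℝ≥0∞} {b w : ℝ → ℝ} {m : ℝ}

/-- The logarithm of `ρ`, as a function of `x = log t`. -/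
def logRho (r : ℝ≥0∞) (b w : ℝ → ℝ) (x : ℝ) : ℝ := w x + logTail r b x + x

lemma almostLinear_logRho (hw : AlmostLinear m w) (hb : AlmostLinear 0 b) (hr : r ≠ 0)
    (hfin : eLpNorm (fun s => eexp (b s)) r (volume.restrict (Ioi 0)) ≠ ∞) :
    AlmostLinear (m + 1) (logRho r b w) := by
  have h := (hw.add (almostLinear_logTail hb hr hfin)).add (almostLinear_mul_id 1)
  simp only [add_zero, one_mul] at h
  exact h

/-- The quasi-norm of the limiting space in logarithmic coordinates. -/
def logNormL (N₀ N₁ : V → ℝ≥0∞) (r q : ℝ≥0∞) (b w : ℝ → ℝ) (f : V) : ℝ≥0∞ :=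
  limitingNorm r q b w fun y => Kf N₀ N₁ (Real.exp y) f

lemma exists_eexp_mul_Kf_le (N₀ : V → ℝ≥0∞) (hN₁ : IsGroupQuasiSeminorm N₁)
    (hw : AlmostLinear m w) (hb : AlmostLinear 0 b) (hr : r ≠ 0) (hq : q ≠ 0)
    (hfin : eLpNorm (fun s => eexp (b s)) r (volume.restrict (Ioi 0)) ≠ ∞) :
    ∃ C : ℝ≥0, ∀ f x, eexp (w x + logTail r b x) * Kf N₀ N₁ (Real.exp x) f ≤
      C * Kf (logNormL N₀ N₁ r q b w) N₁ (Real.exp (logRho r b w x)) f := by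
  obtain ⟨C, hC⟩ :=
    exists_eexp_logTail_mul_le_limitingNorm (locallyComparable_Kf N₀ N₁) hw hb hr hq hfin
  obtain ⟨D, hD⟩ := hN₁.exists_Kf_le_add
  refine ⟨D * (C + 1), fun f x => le_mul_Kf coe_ne_top fun g => ?_⟩
  calc eexp (w x + logTail r b x) * Kf N₀ N₁ (Real.exp x) f
      ≤ eexp (w x + logTail r b x) * (D * (Kf N₀ N₁ (Real.exp x) g + eexp x * N₁ (f - g))) := by
        gcongr
        exact hD _ _ _ _
    _ = D * (eexp (w x + logTail r b x) * Kf N₀ N₁ (Real.exp x) g +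
        eexp (logRho r b w x) * N₁ (f - g)) := by
      rw [logRho, eexp_add _ x]
      ring
    _ ≤ D * (↑(C + 1) * logNormL N₀ N₁ r q b w g +
        ↑(C + 1) * (eexp (logRho r b w x) * N₁ (f - g))) := by
      refine mul_le_mul_right (add_le_add ((hC g x).trans ?_) ?_) _
      · exact mul_le_mul_left (coe_le_coe.2 le_self_add) _
      · exact le_mul_of_one_le_left' (one_le_coe_iff.2 le_add_self)
    _ = _ := by
      rw [← mul_add, ← mul_assoc, ENNReal.coe_mul]
      rfl

lemma exists_eexp_mul_Kf_le_leftSup_add (N₀ : V → ℝ≥0∞) (hN₁ : IsGroupQuasiSeminorm N₁)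
    (hw : AlmostLinear m w) (hb : AlmostLinear 0 b) (hr : r ≠ 0)
    (hfin : eLpNorm (fun s => eexp (b s)) r (volume.restrict (Ioi 0)) ≠ ∞) {ε : ℝ}
    (hεm : ε < m + 1) :
    ∃ C : ℝ≥0, ∀ f g x, ∀ y ≤ x,
      eexp (w y + logTail r b y + ε * (x - y)) * Kf N₀ N₁ (Real.exp y) g ≤
        C * (leftSup ε (fun u => eexp (w u + logTail r b u) * Kf N₀ N₁ (Real.exp u) f) x +
          eexp (w x + logTail r b x) * (eexp x * N₁ (f - g))) := by
  obtain ⟨D, hD⟩ := hN₁.exists_Kf_le_add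
  obtain ⟨M, hM⟩ := (almostLinear_logRho hw hb hr hfin).exists_le_sub hεm
  refine ⟨D * (1 + (Real.exp M).toNNReal), fun f g x y hy => ?_⟩
  set F : ℝ → ℝ≥0∞ := fun u => eexp (w u + logTail r b u) * Kf N₀ N₁ (Real.exp u) f
  set c : ℝ≥0∞ := eexp (w x + logTail r b x)
  set A : ℝ := w y + logTail r b y + ε * (x - y) with hA
  have hKf : eexp A * Kf N₀ N₁ (Real.exp y) f ≤ leftSup ε F x := by
    rw [hA, add_comm, eexp_add, mul_assoc]
    exact mul_le_leftSup ε F hy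
  have hN : eexp A * (eexp y * N₁ (f - g)) ≤ eexp M * (c * (eexp x * N₁ (f - g))) := by
    have hexp : A + y ≤ M + (w x + logTail r b x + x) := by
      have := hM x y hy
      simp only [logRho] at this
      linarith
    simp only [c, ← mul_assoc, ← eexp_add]
    gcongr
    exact eexp_mono (by linarith)
  calc eexp A * Kf N₀ N₁ (Real.exp y) g
      ≤ eexp A * (D * (Kf N₀ N₁ (Real.exp y) f + eexp y * N₁ (g - f))) :=
        mul_le_mul_right (hD _ _ _ _) _
    _ = D * (eexp A * Kf N₀ N₁ (Real.exp y) f + eexp A * (eexp y * N₁ (f - g))) := by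
      rw [← neg_sub f g, hN₁.map_neg]
      ring
    _ ≤ D * ((1 + eexp M) * leftSup ε F x + (1 + eexp M) * (c * (eexp x * N₁ (f - g)))) := by
      refine mul_le_mul_right (add_le_add (hKf.trans ?_) (hN.trans ?_)) _
      · exact le_mul_of_one_le_left' le_self_add
      · exact mul_le_mul_left le_add_self _
    _ = _ := by
      rw [← mul_add, ← mul_assoc, ENNReal.coe_mul]
      rfl

lemma exists_logNormL_le (N₀ : V → ℝ≥0∞) (hN₁ : IsGroupQuasiSeminorm N₁) (hm : m < 0)
    (hw : AlmostLinear m w) (hb : AlmostLinear 0 b) (hr : r ≠ 0) (q : ℝ≥0∞)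
    (hfin : eLpNorm (fun s => eexp (b s)) r (volume.restrict (Ioi 0)) ≠ ∞) {ε : ℝ}
    (hε : 0 < ε) (hεm : ε < m + 1) :
    ∃ C : ℝ≥0, ∀ f g x, logNormL N₀ N₁ r q b w g ≤
      C * (leftSup ε (fun u => eexp (w u + logTail r b u) * Kf N₀ N₁ (Real.exp u) f) x +
        eexp (w x + logTail r b x) * (N₀ g + eexp x * N₁ (f - g))) := by
  obtain ⟨C, hC⟩ := exists_limitingNorm_le hm hw hb hr hfin hε q
  obtain ⟨D, hD⟩ := exists_eexp_mul_Kf_le_leftSup_add N₀ hN₁ hw hb hr hfin hεm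
  refine ⟨C * (D + 1), fun f g x => ?_⟩
  rw [ENNReal.coe_mul, mul_assoc]
  refine hC _ x _ (fun y hy => (hD f g x y hy).trans ?_) fun y _ => ?_
  · gcongr
    exacts [le_self_add, le_add_self]
  · calc eexp (w x + logTail r b x) * Kf N₀ N₁ (Real.exp y) g
        ≤ eexp (w x + logTail r b x) * (N₀ g + eexp x * N₁ (f - g)) :=
          mul_le_mul_right ((hN₁.Kf_le _ g).trans le_self_add) _
      _ ≤ _ := le_add_self
      _ ≤ _ := le_mul_of_one_le_left' (one_le_coe_iff.2 le_add_self)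

lemma exists_Kf_logNormL_le (N₀ : V → ℝ≥0∞) (hN₁ : IsGroupQuasiSeminorm N₁) (hm : m < 0)
    (hw : AlmostLinear m w) (hb : AlmostLinear 0 b) (hr : r ≠ 0) (q : ℝ≥0∞)
    (hfin : eLpNorm (fun s => eexp (b s)) r (volume.restrict (Ioi 0)) ≠ ∞) {ε : ℝ}
    (hε : 0 < ε) (hεm : ε < m + 1) :
    ∃ C : ℝ≥0, ∀ f x, Kf (logNormL N₀ N₁ r q b w) N₁ (Real.exp (logRho r b w x)) f ≤
      C * leftSup ε (fun u => eexp (w u + logTail r b u) * Kf N₀ N₁ (Real.exp u) f) x := by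
  obtain ⟨C, hC⟩ := exists_logNormL_le N₀ hN₁ hm hw hb hr q hfin hε hεm
  refine ⟨2 * C + 1, fun f x => ?_⟩
  set F : ℝ → ℝ≥0∞ := fun u => eexp (w u + logTail r b u) * Kf N₀ N₁ (Real.exp u) f
  set c : ℝ≥0∞ := eexp (w x + logTail r b x)
  have hdecomp : ∀ g, Kf (logNormL N₀ N₁ r q b w) N₁ (Real.exp (logRho r b w x)) f ≤
      C * leftSup ε F x + (C + 1) * c * (N₀ g + eexp x * N₁ (f - g)) := fun g =>
    calc Kf (logNormL N₀ N₁ r q b w) N₁ (Real.exp (logRho r b w x)) f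
        ≤ logNormL N₀ N₁ r q b w g + eexp (logRho r b w x) * N₁ (f - g) := iInf_le _ g
      _ ≤ C * (leftSup ε F x + c * (N₀ g + eexp x * N₁ (f - g))) +
          c * (N₀ g + eexp x * N₁ (f - g)) := by
        rw [logRho, eexp_add _ x, mul_assoc]
        gcongr
        exacts [hC f g x, le_add_self]
      _ = _ := by ring
  calc Kf (logNormL N₀ N₁ r q b w) N₁ (Real.exp (logRho r b w x)) f
      ≤ C * leftSup ε F x + (C + 1) * c * Kf N₀ N₁ (Real.exp x) f :=
        tsub_le_iff_left.1 <| le_mul_Kf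
          (ENNReal.mul_ne_top (by simp) (eexp_ne_top _)) fun g => tsub_le_iff_left.2 (hdecomp g)
    _ ≤ C * leftSup ε F x + (C + 1) * leftSup ε F x := by
      rw [mul_assoc]
      gcongr
      exact le_leftSup ε F x
    _ = _ := by
      push_cast
      ring

lemma eLpNorm_Kf_logNormL_dominated {θ : ℝ} {ψ : ℝ → ℝ} (N₀ : V → ℝ≥0∞)
    (hN₁ : IsGroupQuasiSeminorm N₁) (hm : m < 0) (hm' : 0 < m + 1) (hw : AlmostLinear m w)
    (hb : AlmostLinear 0 b) (hr : r ≠ 0) (q s : ℝ≥0∞)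
    (hfin : eLpNorm (fun s => eexp (b s)) r (volume.restrict (Ioi 0)) ≠ ∞)
    (hθ : 0 < θ) (hψ : AlmostLinear (-θ) ψ) :
    (fun f => eLpNorm (fun v => eexp (ψ v) * Kf (logNormL N₀ N₁ r q b w) N₁ (Real.exp v) f)
      s volume) ≲ fun f => eLpNorm (fun x => eexp (ψ (logRho r b w x)) *
        (eexp (w x + logTail r b x) * Kf N₀ N₁ (Real.exp x) f)) s volume := by
  obtain ⟨ε, hε, hεlt⟩ := exists_between (lt_min hm' (half_pos (mul_pos hθ hm')))
  have hℓ := almostLinear_logRho hw hb hr hfin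
  have hΦ := hψ.locallyComparable.mul (locallyComparable_Kf (logNormL N₀ N₁ r q b w) N₁)
  have hF := (hw.add (almostLinear_logTail hb hr hfin)).locallyComparable.mul
    (locallyComparable_Kf N₀ N₁)
  obtain ⟨C, hC⟩ :=
    exists_Kf_logNormL_le N₀ hN₁ hm hw hb hr q hfin hε (hεlt.trans_le (min_le_left _ _))
  obtain ⟨D, hD⟩ := (hψ.comp hℓ).exists_eexp_mul_leftSup_le (ε := ε) (ε' := -ε)
    (by linarith [hεlt.trans_le (min_le_right _ _)])
  refine (hℓ.eLpNorm_dominated_comp hm' hΦ).trans <|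
    (hΦ.comp hℓ).eLpNorm_dominated_of_le_leftSup ((hψ.comp hℓ).locallyComparable.mul hF) hε
      (C := C * D) fun f x => ?_
  calc eexp (ψ (logRho r b w x)) *
        Kf (logNormL N₀ N₁ r q b w) N₁ (Real.exp (logRho r b w x)) f
      ≤ eexp (ψ (logRho r b w x)) * (C *
        leftSup ε (fun u => eexp (w u + logTail r b u) * Kf N₀ N₁ (Real.exp u) f) x) := by
        gcongr
        exact hC f x
    _ ≤ _ := by
      rw [mul_left_comm, ENNReal.coe_mul, mul_assoc]
      exact mul_le_mul_right (hD _ x) _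

lemma eLpNorm_Kf_dominated {p : ℝ} {ψ : ℝ → ℝ} (N₀ : V → ℝ≥0∞)
    (hN₁ : IsGroupQuasiSeminorm N₁) (hm' : 0 < m + 1) (hw : AlmostLinear m w)
    (hb : AlmostLinear 0 b) (hr : r ≠ 0) (hq : q ≠ 0) (s : ℝ≥0∞)
    (hfin : eLpNorm (fun s => eexp (b s)) r (volume.restrict (Ioi 0)) ≠ ∞)
    (hψ : AlmostLinear p ψ) :
    (fun f => eLpNorm (fun x => eexp (ψ (logRho r b w x)) *
      (eexp (w x + logTail r b x) * Kf N₀ N₁ (Real.exp x) f)) s volume) ≲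
      fun f => eLpNorm (fun v => eexp (ψ v) *
        Kf (logNormL N₀ N₁ r q b w) N₁ (Real.exp v) f) s volume := by
  obtain ⟨C, hC⟩ := exists_eexp_mul_Kf_le N₀ hN₁ hw hb hr hq hfin
  have hΦ := hψ.locallyComparable.mul (locallyComparable_Kf (logNormL N₀ N₁ r q b w) N₁)
  refine (Dominated.eLpNorm ⟨C, fun ⟨f, x⟩ => ?_⟩).trans
    ((almostLinear_logRho hw hb hr hfin).eLpNorm_comp_dominated hm' hΦ)
  simp only [Function.uncurry_apply_pair, mul_left_comm (C : ℝ≥0∞)]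
  exact mul_le_mul_right (hC f x) _

end KFunctionalLimiting

lemma Dominated.equivNorms {ι : Type*} {nX nY : ι → ℝ≥0∞} : nX ≲ nY → nY ≲ nX →
    EquivNorms nX nY := by
  rintro ⟨C, hC⟩ ⟨D, hD⟩
  refine ⟨(C + D + 1 : ℝ≥0), by positivity, coe_ne_top, fun f => ⟨?_, (hC f).trans ?_⟩⟩
  · rw [ENNReal.inv_mul_le_iff (by positivity) coe_ne_top]
    refine (hD f).trans (mul_le_mul_left (coe_le_coe.2 ?_) _)
    exact le_add_self.trans le_self_add
  · refine mul_le_mul_left (coe_le_coe.2 ?_) _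
    exact le_self_add.trans le_self_add

section Reiteration

variable {V : Type*} [AddCommGroup V] {r q : ℝ≥0∞} {a b : ℝ → ℝ}

/-- The logarithm of the weight `t ↦ t ^ (-θ) * a t`, as a function of `x = log t`. -/
def logWeight (a : ℝ → ℝ) (θ x : ℝ) : ℝ := Real.log (a (Real.exp x)) - θ * x

lemma SlowlyVarying.almostLinear_logWeight (ha : SlowlyVarying a) (θ : ℝ) :
    AlmostLinear (-θ) (logWeight a θ) := by
  have h := ha.almostLinear.sub (almostLinear_mul_id θ)
  rwa [zero_sub] at h

/-- The logarithm of `b / a`, as a function of `x = log t`. -/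
def logRatio (b a : ℝ → ℝ) (x : ℝ) : ℝ := Real.log (b (Real.exp x)) - Real.log (a (Real.exp x))

lemma SlowlyVarying.almostLinear_logRatio (hb : SlowlyVarying b)
    (ha : SlowlyVarying a) : AlmostLinear 0 (logRatio b a) := by
  have h := hb.almostLinear.sub ha.almostLinear
  rwa [sub_zero] at h

lemma SlowlyVarying.div_exp (hb : SlowlyVarying b) (ha : SlowlyVarying a) (x : ℝ) :
    b (Real.exp x) / a (Real.exp x) = Real.exp (logRatio b a x) := by
  rw [logRatio, Real.exp_sub, ← hb.exp_log, ← ha.exp_log]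

lemma SlowlyVarying.normL_eq_logNormL (hb : SlowlyVarying b)
    (ha : SlowlyVarying a) (hr : r ≠ 0) (hq : q ≠ 0) (N₀ N₁ : V → ℝ≥0∞) (σ : ℝ) :
    normL N₀ N₁ σ r q b a = logNormL N₀ N₁ r q (logRatio b a) (logWeight a σ) :=
  funext fun f => normL_eq_limitingNorm hr hq N₀ N₁ σ ha.exp_log (hb.div_exp ha) f

lemma SlowlyVarying.eLpNorm_logRatio_ne_top (hb : SlowlyVarying b)
    (ha : SlowlyVarying a) (hr : r ≠ 0)
    (hfin : LqNorm r (Ioi 1) (svWgt r fun s => b s / a s) ≠ ∞) :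
    eLpNorm (fun s => eexp (logRatio b a s)) r (volume.restrict (Ioi 0)) ≠ ∞ := by
  rwa [← LqNorm_Ioi_svWgt (c := fun s => b s / a s) hr (hb.div_exp ha), Real.exp_zero]

lemma SlowlyVarying.mul_tail_exp (hb : SlowlyVarying b) (ha : SlowlyVarying a)
    (hr : r ≠ 0) (hfin : LqNorm r (Ioi 1) (svWgt r fun s => b s / a s) ≠ ∞) (x : ℝ) :
    a (Real.exp x) * (LqNorm r (Ioi (Real.exp x)) (svWgt r fun s => b s / a s)).toReal =
      Real.exp (Real.log (a (Real.exp x)) + logTail r (logRatio b a) x) := by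
  rw [LqNorm_Ioi_svWgt (c := fun s => b s / a s) hr (hb.div_exp ha), Real.exp_add, ← ha.exp_log,
    ← eexp_logTail (hb.almostLinear_logRatio ha) hr (hb.eLpNorm_logRatio_ne_top ha hr hfin),
    eexp, ENNReal.toReal_ofReal (Real.exp_nonneg _)]

lemma equivNorms_eLpNorm_Kf_logNormL {N₁ : V → ℝ≥0∞} {m θ : ℝ} {w ψ : ℝ → ℝ} (N₀ : V → ℝ≥0∞)
    (hN₁ : IsGroupQuasiSeminorm N₁) (hm : m < 0) (hm' : 0 < m + 1) (hw : AlmostLinear m w)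
    (hb : AlmostLinear 0 b) (hr : r ≠ 0) (hq : q ≠ 0) (s : ℝ≥0∞)
    (hfin : eLpNorm (fun s => eexp (b s)) r (volume.restrict (Ioi 0)) ≠ ∞)
    (hθ : 0 < θ) (hψ : AlmostLinear (-θ) ψ) :
    EquivNorms
      (fun f => eLpNorm (fun v => eexp (ψ v) * Kf (logNormL N₀ N₁ r q b w) N₁ (Real.exp v) f)
        s volume)
      fun f => eLpNorm (fun x => eexp (ψ (logRho r b w x)) *
        (eexp (w x + logTail r b x) * Kf N₀ N₁ (Real.exp x) f)) s volume :=
  (eLpNorm_Kf_logNormL_dominated N₀ hN₁ hm hm' hw hb hr q s hfin hθ hψ).equivNorms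
    (eLpNorm_Kf_dominated N₀ hN₁ hm' hw hb hr hq s hfin hψ)

end Reiteration

theorem theorem13_general {V : Type*} [AddCommGroup V] (N₀ : V → ℝ≥0∞) {N₁ : V → ℝ≥0∞}
    (hN₁ : IsGroupQuasiSeminorm N₁) (θ₀ θ : ℝ) (hθ₀ : 0 < θ₀) (hθ₀' : θ₀ < 1) (hθ : 0 < θ)
    (q₀ r₀ r : ℝ≥0∞) (hq₀ : 0 < q₀) (hr₀ : 0 < r₀) (hr : 0 < r) (a a₀ b₀ : ℝ → ℝ)
    (h_sv_a : SlowlyVarying a) (h_sv_a₀ : SlowlyVarying a₀) (h_sv_b₀ : SlowlyVarying b₀)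
    (hfin : LqNorm r₀ (Ioi 1) (svWgt r₀ (fun s => b₀ s / a₀ s)) ≠ ∞) (c₀ ρ : ℝ → ℝ)
    (hc₀ : ∀ t, c₀ t = a₀ t * (LqNorm r₀ (Ioi t) (svWgt r₀ (fun s => b₀ s / a₀ s))).toReal)
    (hρ : ∀ t, ρ t = t ^ (1 - θ₀) * c₀ t) :
    EquivNorms
      (normK (normL N₀ N₁ θ₀ r₀ q₀ b₀ a₀) N₁ θ r a)
      (normK N₀ N₁ ((1 - θ) * θ₀ + θ) r (fun t => c₀ t ^ (1 - θ) * a (ρ t))) := by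
  set ℓ := logRho r₀ (logRatio b₀ a₀) (logWeight a₀ θ₀)
  set γ := fun x => Real.log (a₀ (Real.exp x)) + logTail r₀ (logRatio b₀ a₀) x
  have hc₀_exp : ∀ x, c₀ (Real.exp x) = Real.exp (γ x) := fun x =>
    (hc₀ _).trans (h_sv_b₀.mul_tail_exp h_sv_a₀ hr₀.ne' hfin x)
  have hρ_exp : ∀ x, ρ (Real.exp x) = Real.exp (ℓ x) := fun x => by
    rw [hρ, hc₀_exp, ← Real.exp_mul, ← Real.exp_add]
    simp only [ℓ, γ, logRho, logWeight]
    ring_nf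
  have hweight : ∀ x, c₀ (Real.exp x) ^ (1 - θ) * a (ρ (Real.exp x)) =
      Real.exp (γ x * (1 - θ) + Real.log (a (Real.exp (ℓ x)))) := fun x => by
    rw [hc₀_exp, hρ_exp, ← Real.exp_mul, Real.exp_add, ← h_sv_a.exp_log]
  have hexponent : ∀ x, γ x * (1 - θ) + Real.log (a (Real.exp (ℓ x))) - ((1 - θ) * θ₀ + θ) * x =
      logWeight a θ (ℓ x) + (logWeight a₀ θ₀ x + logTail r₀ (logRatio b₀ a₀) x) := fun x => by
    simp only [γ, ℓ, logWeight, logRho]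
    ring
  rw [funext (normK_eq_eLpNorm hr.ne' _ N₁ θ h_sv_a.exp_log),
    funext (normK_eq_eLpNorm hr.ne' N₀ N₁ _ hweight),
    h_sv_b₀.normL_eq_logNormL h_sv_a₀ hr₀.ne' hq₀.ne']
  simp only [hexponent, eexp_add (logWeight a θ _), mul_assoc]
  exact equivNorms_eLpNorm_Kf_logNormL N₀ hN₁ (neg_lt_zero.2 hθ₀) (by linarith)
    (h_sv_a₀.almostLinear_logWeight θ₀) (h_sv_b₀.almostLinear_logRatio h_sv_a₀) hr₀.ne' hq₀.ne' r
    (h_sv_b₀.eLpNorm_logRatio_ne_top h_sv_a₀ hr₀.ne' hfin) hθ (h_sv_a.almostLinear_logWeight θ)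

theorem theorem13
    (A₀ A₁ : QuasiBanach E)
    (hne : ∃ x : E, x ≠ 0 ∧ A₀.N x ≠ ∞ ∧ A₁.N x ≠ ∞)
    (θ₀ θ : ℝ) (hθ₀ : 0 < θ₀) (hθ₀' : θ₀ < 1) (hθ : 0 < θ) (hθ' : θ ≤ 1)
    (q₀ r₀ r : ℝ≥0∞) (hq₀ : 0 < q₀) (hr₀ : 0 < r₀) (hr : 0 < r)
    (a a₀ b₀ : ℝ → ℝ)
    (h_sv_a : SlowlyVarying a)
    (h_sv_a₀ : SlowlyVarying a₀)
    (h_sv_b₀ : SlowlyVarying b₀)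
    (hfin : LqNorm r₀ (Ioi 1) (svWgt r₀ (fun s => b₀ s / a₀ s)) ≠ ∞)
    (hθ1 : θ = 1 → LqNorm r (Ioo 0 1) (svWgt r (fun s => a s)) ≠ ∞)
    (c₀ ρ : ℝ → ℝ)
    (hc₀ : ∀ t, c₀ t = a₀ t * (LqNorm r₀ (Ioi t) (svWgt r₀ (fun s => b₀ s / a₀ s))).toReal)
    (hρ : ∀ t, ρ t = t ^ (1 - θ₀) * c₀ t) :
    EquivNorms
      (normK (normL A₀.N A₁.N θ₀ r₀ q₀ b₀ a₀) A₁.N θ r a)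
      (normK A₀.N A₁.N ((1 - θ) * θ₀ + θ) r (fun t => c₀ t ^ (1 - θ) * a (ρ t))) :=
  theorem13_general A₀.N A₁.isGroupQuasiSeminorm θ₀ θ hθ₀ hθ₀' hθ q₀ r₀ r hq₀ hr₀ hr a a₀ b₀
    h_sv_a h_sv_a₀ h_sv_b₀ hfin c₀ ρ hc₀ hρ

end
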